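/- arXiv:2408.09968 — 10 statements merged into one kernel-verified Lean document; each statement's English description precedes it below -/
import Mathlib

section
/- Let σ(k,n) be as defined. Suppose s : ℤ × ℤ → ℤ satisfies: s(0,n) = 1 for all n ≥ 0; s(k,n) = 0 whenever k < 0 or k > n; and s(k,n) = (-1)^k · s(k,n-1) + s(k-1,n-1) for all n ≥ 1 and 1 ≤ k ≤ n. Then s(k,n) = σ(k,n) for all n ≥ 0 and 0 ≤ k ≤ n. -/
/-!
The recursion expresses row `n` of `s` through row `n - 1`, so together with the boundary values it
determines `s`; it suffices that `σ` satisfies the same recursion (`sigmaInt_succ_succ`). Splitting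
by the parities of `k` and `n`, the recursion for `σ` is Pascal's rule when both are even, a
cancellation of two equal binomial coefficients when `k` is odd and `n` is even, and trivial
when `n` is odd, since one of the two terms on the right then vanishes.
-/

/-- For integers `k, n`: `σ(k,n) = 0` if `k < 0` or `k > n`; otherwise `σ(k,n) = 0`
if `k` is odd and `n` is even, and `σ(k,n) = binomial(⌊n/2⌋, ⌊k/2⌋)` otherwise. -/
def sigmaInt (k n : ℤ) : ℤ :=
  if k < 0 ∨ n < k then 0
  else if Odd k ∧ Even n then 0
  else ((n / 2).toNat.choose (k / 2).toNat : ℤ)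

/-! The four closed forms below hold for all natural `j` and `m`: when `k > n`,
the binomial coefficient vanishes by itself. -/

lemma sigmaInt_even_even (j m : ℕ) : sigmaInt (2 * j) (2 * m) = m.choose j := by
  unfold sigmaInt
  have h1 : (2 * (m : ℤ) / 2).toNat = m := by omega
  have h2 : (2 * (j : ℤ) / 2).toNat = j := by omega
  rw [h1, h2]
  split_ifs with h h'
  · rw [Nat.choose_eq_zero_of_lt (by omega)]; rfl
  · exact absurd h'.1 (by simp)
  · rfl

lemma sigmaInt_even_odd (j m : ℕ) : sigmaInt (2 * j) (2 * m + 1) = m.choose j := by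
  unfold sigmaInt
  have h1 : ((2 * (m : ℤ) + 1) / 2).toNat = m := by omega
  have h2 : (2 * (j : ℤ) / 2).toNat = j := by omega
  rw [h1, h2]
  split_ifs with h h'
  · rw [Nat.choose_eq_zero_of_lt (by omega)]; rfl
  · exact absurd h'.1 (by simp)
  · rfl

lemma sigmaInt_odd_even (j m : ℕ) : sigmaInt (2 * j + 1) (2 * m) = 0 := by
  have h : Odd (2 * (j : ℤ) + 1) ∧ Even (2 * (m : ℤ)) := ⟨⟨j, rfl⟩, even_two_mul _⟩
  simp only [sigmaInt, if_pos h, ite_self]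

lemma sigmaInt_odd_odd (j m : ℕ) : sigmaInt (2 * j + 1) (2 * m + 1) = m.choose j := by
  unfold sigmaInt
  have h1 : ((2 * (m : ℤ) + 1) / 2).toNat = m := by omega
  have h2 : ((2 * (j : ℤ) + 1) / 2).toNat = j := by omega
  rw [h1, h2]
  split_ifs with h h'
  · rw [Nat.choose_eq_zero_of_lt (by omega)]; rfl
  · rcases h'.2 with ⟨r, hr⟩
    omega
  · rfl

lemma sigmaInt_succ_succ (k n : ℕ) :
    sigmaInt (k + 1) (n + 1) = (-1) ^ (k + 1) * sigmaInt (k + 1) n + sigmaInt k n := by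
  rcases Nat.even_or_odd' k with ⟨j, rfl | rfl⟩ <;> rcases Nat.even_or_odd' n with ⟨m, rfl | rfl⟩
  · push_cast
    rw [sigmaInt_odd_odd, sigmaInt_odd_even, sigmaInt_even_even]
    ring
  · have e : ((2 * m + 1 : ℕ) : ℤ) + 1 = 2 * ((m + 1 : ℕ) : ℤ) := by push_cast; ring
    have e1 : ((2 * j : ℕ) : ℤ) = 2 * (j : ℤ) := by push_cast; ring
    have e2 : ((2 * m + 1 : ℕ) : ℤ) = 2 * (m : ℤ) + 1 := by push_cast; ring
    rw [e, e1, e2, sigmaInt_odd_even, sigmaInt_odd_odd, sigmaInt_even_odd, pow_succ, pow_mul]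
    norm_num
  · have e : ((2 * j + 1 : ℕ) : ℤ) + 1 = 2 * ((j + 1 : ℕ) : ℤ) := by push_cast; ring
    have p : (-1 : ℤ) ^ (2 * j + 1 + 1) = 1 := Even.neg_one_pow ⟨j + 1, by ring⟩
    have e1 : ((2 * j + 1 : ℕ) : ℤ) = 2 * (j : ℤ) + 1 := by push_cast; ring
    have e2 : ((2 * m : ℕ) : ℤ) = 2 * (m : ℤ) := by push_cast; ring
    rw [e, p, e1, e2, sigmaInt_even_odd, sigmaInt_even_even, sigmaInt_odd_even]
    ring
  · have e : ((2 * j + 1 : ℕ) : ℤ) + 1 = 2 * ((j + 1 : ℕ) : ℤ) := by push_cast; ring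
    have e' : ((2 * m + 1 : ℕ) : ℤ) + 1 = 2 * ((m + 1 : ℕ) : ℤ) := by push_cast; ring
    have p : (-1 : ℤ) ^ (2 * j + 1 + 1) = 1 := Even.neg_one_pow ⟨j + 1, by ring⟩
    have e1 : ((2 * j + 1 : ℕ) : ℤ) = 2 * (j : ℤ) + 1 := by push_cast; ring
    have e2 : ((2 * m + 1 : ℕ) : ℤ) = 2 * (m : ℤ) + 1 := by push_cast; ring
    rw [e, e', p, e1, e2, sigmaInt_even_even, sigmaInt_even_odd, sigmaInt_odd_odd,
      Nat.choose_succ_succ]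
    push_cast
    ring

lemma sigmaInt_zero_left (n : ℕ) : sigmaInt 0 n = 1 := by
  simp [sigmaInt]

theorem recursion_determines_sigma (s : ℤ × ℤ → ℤ)
    (h0 : ∀ n : ℤ, 0 ≤ n → s (0, n) = 1)
    (hout : ∀ k n : ℤ, k < 0 ∨ n < k → s (k, n) = 0)
    (hrec : ∀ k n : ℤ, 1 ≤ n → 1 ≤ k → k ≤ n →
      s (k, n) = (-1) ^ k.toNat * s (k, n - 1) + s (k - 1, n - 1)) :
    ∀ k n : ℤ, 0 ≤ n → 0 ≤ k → k ≤ n → s (k, n) = sigmaInt k n := by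
  -- The induction covers all `k ≥ 0`: the recursion at `k = n` refers to the entry `(n, n - 1)`.
  have key : ∀ n k : ℕ, s (k, n) = sigmaInt k n := by
    intro n
    induction n with
    | zero =>
      intro k
      rcases k with _ | k
      · rw [Nat.cast_zero, h0 0 le_rfl]
        exact (sigmaInt_zero_left 0).symm
      · have h : ((k + 1 : ℕ) : ℤ) < 0 ∨ ((0 : ℕ) : ℤ) < (k + 1 : ℕ) := by omega
        rw [hout _ _ h, sigmaInt, if_pos h]
    | succ n ih =>
      intro k
      rcases k with _ | k
      · rw [Nat.cast_zero, h0 _ (by omega), sigmaInt_zero_left]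
      · by_cases hk : k ≤ n
        · have hr := hrec (k + 1 : ℕ) (n + 1 : ℕ) (by omega) (by omega) (by omega)
          have en : ((n + 1 : ℕ) : ℤ) - 1 = n := by omega
          have ek : ((k + 1 : ℕ) : ℤ) - 1 = k := by omega
          rw [en, ek, ih, ih, Int.toNat_natCast] at hr
          rw [hr]
          push_cast
          exact (sigmaInt_succ_succ k n).symm
        · have h : ((k + 1 : ℕ) : ℤ) < 0 ∨ ((n + 1 : ℕ) : ℤ) < (k + 1 : ℕ) := by omega
          rw [hout _ _ h, sigmaInt, if_pos h]
  intro k n hn hk _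
  lift k to ℕ using hk
  lift n to ℕ using hn
  exact key n k
end

section
/- Let V be a finite-dimensional real inner product space and let J₀, J₁ be orthogonal complex structures on V inducing opposite orientations, i.e. there exists an ℝ-linear automorphism g of V with negative determinant such that J₁ = g ∘ J₀ ∘ g⁻¹. Then there exists a 2-dimensional real subspace L of V with J₀(L) ⊆ L such that J₁ v = -J₀ v for every v ∈ L. -/
/-!
If `J₀ + J₁` kills some `v ≠ 0`, then `L = span {v, J₀ v}` works. Otherwise
`1 - J₁ J₀ = -(J₀ + J₁) J₀` is invertible and conjugates `J₀` to `J₁`, so `g` differs from it by an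
automorphism commuting with `J₀`. Such an automorphism is `ℂ`-linear for the complex structure
`J₀`, hence its real determinant is the squared modulus of a complex determinant and is not
negative (`det_nonneg_of_commute`). The map `1 - J₁ J₀` has positive determinant too: `-J₁ J₀` is an
isometry `Q`, and the path `1 + t Q`, `0 ≤ t ≤ 1`, joins it to the identity through injective maps
(`det_one_add_pos`). So `det g ≥ 0`, contradicting the hypothesis.
-/

/-- The real determinant of a complex-linear map is the squared modulus of its complex one. -/
lemma det_restrictScalars_nonneg {V : Type*} [AddCommGroup V] [Module ℝ V] [Module ℂ V]
    [IsScalarTower ℝ ℂ V] (h : V →ₗ[ℂ] V) :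
    0 ≤ LinearMap.det (h.restrictScalars ℝ) := by
  rw [LinearMap.det_restrictScalars, Algebra.norm_complex_apply]
  exact Complex.normSq_nonneg _

/-- An endomorphism commuting with `J` is linear for the complex scalars `a + bi ↦ a + b J`. -/
lemma det_nonneg_of_commute {V : Type*} [AddCommGroup V] [Module ℝ V]
    (J h : V →ₗ[ℝ] V) (hJ : J ∘ₗ J = -LinearMap.id) (hc : ∀ v, h (J v) = J (h v)) :
    0 ≤ LinearMap.det h := by
  let φ : ℂ →ₐ[ℝ] Module.End ℝ V := Complex.lift ⟨J, hJ⟩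
  let : Module ℂ V := Module.compHom V φ.toRingHom
  have hsmul (z : ℂ) (v : V) : z • v = z.re • v + z.im • J v := by
    change φ z v = _
    simp [φ, Complex.lift_apply, Complex.liftAux_apply, Module.algebraMap_end_apply]
  have : IsScalarTower ℝ ℂ V := ⟨fun r z v => by
    simp [hsmul, smul_add, smul_smul]⟩
  let hC : V →ₗ[ℂ] V :=
    { toFun := h
      map_add' := map_add h
      map_smul' := fun z v => by simp [hsmul, hc] }
  exact det_restrictScalars_nonneg hC

/-- `det (1 + t Q)` does not vanish on `[0, 1]` and equals `1` at `t = 0`. For `t < 1` a kernel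
vector `v = -t Q v` would satisfy `‖v‖ = t ‖v‖`. -/
lemma det_one_add_pos {V : Type*} [NormedAddCommGroup V] [InnerProductSpace ℝ V]
    [FiniteDimensional ℝ V] (Q : V →ₗ[ℝ] V) (hQ : ∀ v, ‖Q v‖ = ‖v‖)
    (hker : ∀ v, v + Q v = 0 → v = 0) : 0 < LinearMap.det (1 + Q) := by
  have hne : ∀ t ∈ Set.Icc (0 : ℝ) 1, LinearMap.det (1 + t • Q) ≠ 0 := by
    intro t ht h0
    obtain ⟨v, hv, hv0⟩ := (Submodule.ne_bot_iff _).1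
      (LinearMap.bot_lt_ker_of_det_eq_zero h0).ne'
    have hv' : v + t • Q v = 0 := by simpa using hv
    have hn : ‖v‖ = t * ‖v‖ := by
      have h1 := congrArg norm (eq_neg_of_add_eq_zero_left hv')
      rwa [norm_neg, norm_smul, hQ, Real.norm_of_nonneg ht.1] at h1
    have ht1 : t = 1 := by
      have := norm_pos_iff.2 hv0
      exact mul_right_cancel₀ this.ne' (by linarith)
    exact hv0 (hker v (by simpa [ht1] using hv'))
  have hcont : Continuous fun t : ℝ => LinearMap.det (1 + t • Q) := by
    let b := Module.finBasis ℝ V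
    simp_rw [← LinearMap.det_toMatrix b, map_add, map_smul]
    fun_prop
  by_contra hle
  obtain ⟨t, ht, h0⟩ := intermediate_value_Icc' zero_le_one hcont.continuousOn
    (show (0 : ℝ) ∈ Set.Icc _ _ from ⟨by simpa using hle, by simp⟩)
  exact hne t ht h0


/-- If two orthogonal complex structures `J₀, J₁` on a finite-dimensional real inner
product space `V` induce opposite orientations (i.e. they are conjugate by an automorphism
of negative determinant), then there is a `2`-dimensional subspace `L`, stabilised by `J₀`,
on which `J₁ = -J₀`. -/
theorem exists_line_where_opposite (V : Type*) [NormedAddCommGroup V]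
    [InnerProductSpace ℝ V] [FiniteDimensional ℝ V]
    (J₀ J₁ : V →ₗ[ℝ] V)
    (hJ₀iso : ∀ v, ‖J₀ v‖ = ‖v‖) (hJ₀sq : J₀ ∘ₗ J₀ = -LinearMap.id)
    (hJ₁iso : ∀ v, ‖J₁ v‖ = ‖v‖) (hJ₁sq : J₁ ∘ₗ J₁ = -LinearMap.id)
    (g : V ≃ₗ[ℝ] V) (hdet : LinearMap.det (g : V →ₗ[ℝ] V) < 0)
    (hconj : ∀ v, J₁ v = g (J₀ (g.symm v))) :
    ∃ L : Submodule ℝ V, Module.finrank ℝ L = 2 ∧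
      (∀ v ∈ L, J₀ v ∈ L) ∧ (∀ v ∈ L, J₁ v = -(J₀ v)) := by
  have h0 (v : V) : J₀ (J₀ v) = -v := by simpa using LinearMap.congr_fun hJ₀sq v
  have h1 (v : V) : J₁ (J₁ v) = -v := by simpa using LinearMap.congr_fun hJ₁sq v
  by_cases hex : ∃ v, v ≠ 0 ∧ J₁ v = -(J₀ v)
  · obtain ⟨v, hv, hJv⟩ := hex
    have hJJ : J₁ (J₀ v) = v := by
      rw [← neg_eq_iff_eq_neg.2 hJv, map_neg, h1, neg_neg]
    have hli : LinearIndependent ℝ ![v, J₀ v] := by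
      rw [LinearIndependent.pair_iff' hv]
      intro a ha
      have h2 : (a * a + 1) • v = 0 := by
        have h3 := h0 v
        rw [← ha, map_smul, ← ha, smul_smul] at h3
        rw [add_smul, h3, one_smul, neg_add_cancel]
      rcases smul_eq_zero.1 h2 with h | h
      · nlinarith [mul_self_nonneg a]
      · exact hv h
    refine ⟨Submodule.span ℝ {v, J₀ v}, ?_, ?_, ?_⟩
    · have hr := finrank_span_eq_card hli
      rwa [Matrix.range_cons_cons_empty, Fintype.card_fin] at hr
    · intro w hw
      obtain ⟨a, b, rfl⟩ := Submodule.mem_span_pair.1 hw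
      refine Submodule.mem_span_pair.2 ⟨-b, a, ?_⟩
      simp only [map_add, map_smul, h0]
      module
    · intro w hw
      obtain ⟨a, b, rfl⟩ := Submodule.mem_span_pair.1 hw
      simp only [map_add, map_smul, h0, hJv, hJJ]
      module
  · exfalso
    let B : V →ₗ[ℝ] V := 1 + -(J₁ ∘ₗ J₀)
    have hB (v : V) : B v = v - J₁ (J₀ v) := by simp [B, sub_eq_add_neg]
    have hBpos : 0 < LinearMap.det B := by
      refine det_one_add_pos _ (fun v => by simp [hJ₀iso, hJ₁iso]) fun v hv => ?_
      by_contra hv0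
      refine hex ⟨v, hv0, ?_⟩
      have hv' : v = J₁ (J₀ v) := by
        simpa [← sub_eq_add_neg, sub_eq_zero] using hv
      rw [hv', h1, ← hv']
    -- `J₀ = g⁻¹ J₁ g` and `J₁ B = B J₀`, so `g⁻¹ B` commutes with `J₀`.
    have hnn := det_nonneg_of_commute J₀ ((g.symm : V →ₗ[ℝ] V) ∘ₗ B) hJ₀sq fun v => by
      have hBJ : B (J₀ v) = J₁ (B v) := by
        simp only [hB, h0, map_sub, h1, map_neg]
        abel
      simp [hBJ, hconj]
    have hgg : LinearMap.det (g : V →ₗ[ℝ] V) * LinearMap.det (g.symm : V →ₗ[ℝ] V) = 1 := by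
      rw [← LinearMap.det_comp]; simp
    rw [LinearMap.det_comp] at hnn
    have hs := nonneg_of_mul_nonneg_left hnn hBpos
    nlinarith
end

section
/- Let V be a finite-dimensional real inner product space and let J₀, J₁ be orthogonal complex structures on V. Then there is a finite family of pairwise orthogonal subspaces W₁, …, W_r of V whose internal direct sum is V, each invariant under both J₀ and J₁, such that for each i either: (a) dim W_i = 2 and the restriction of J₁ to W_i equals the restriction of J₀ or of -J₀; or (b) dim W_i = 4 and there exist θ ∈ (0,π) and an ℝ-linear isometric isomorphism φ : W_i → ℍ satisfying φ(J₀ x) = i·φ(x) and φ(J₁ x) = (cos θ · i + sin θ · k)·φ(x) for all x ∈ W_i. -/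
/-!
The symmetric operator `S = J₀ J₁ + J₁ J₀` commutes with both structures, and each eigenvalue of
`S` has the form `-2c` with `|c| ≤ 1`: for a unit eigenvector `v`, skewness of `J₀` and `J₁` gives
`c = ⟪J₀ v, J₁ v⟫`.

* If `c = ±1`, the equality case of Cauchy-Schwarz gives `J₁ v = ± J₀ v`, and `span {v, J₀ v}` is a
  two-dimensional invariant subspace.
* If `c = cos θ` with `θ ∈ (0, π)`, put `K = (sin θ)⁻¹ (J₁ - cos θ J₀)`. On the eigenspace
  `K² = -1` and `K J₀ = -J₀ K`, so `1, i, j, k ↦ v, J₀ v, K J₀ v, K v` is an isometric embedding of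
  `ℍ` under which `J₀` and `K` become left multiplication by `i` and `k`.

Since `J₀` and `J₁` are skew, the orthogonal complement of an invariant subspace is invariant, so
splitting off one such block at a time, by induction on the dimension, decomposes `V`.
-/

open scoped Quaternion RealInnerProductSpace

/-- The quaternion `i`. -/
def qI : ℍ[ℝ] := ⟨0, 1, 0, 0⟩
/-- The quaternion `k`. -/
def qK : ℍ[ℝ] := ⟨0, 0, 0, 1⟩

section

variable {V : Type*} [NormedAddCommGroup V] [InnerProductSpace ℝ V]

/-- `W` is an elementary block for the pair `(J₀, J₁)`: an invariant subspace which is either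
two-dimensional with `J₁ = ± J₀` on it, or a copy of `ℍ` with `J₀` and `J₁` acting as left
multiplication by `i` and `cos θ · i + sin θ · k`. -/
def IsBlock (J₀ J₁ : V →ₗ[ℝ] V) (W : Submodule ℝ V) : Prop :=
  (∀ v ∈ W, J₀ v ∈ W) ∧ (∀ v ∈ W, J₁ v ∈ W) ∧
    ((Module.finrank ℝ W = 2 ∧
        ((∀ v ∈ W, J₁ v = J₀ v) ∨ (∀ v ∈ W, J₁ v = -(J₀ v)))) ∨
     (Module.finrank ℝ W = 4 ∧
        ∃ θ ∈ Set.Ioo (0 : ℝ) Real.pi, ∃ φ : W ≃ₗᵢ[ℝ] ℍ[ℝ],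
          (∀ x y : W, J₀ (x : V) = (y : V) → φ y = qI * φ x) ∧
          (∀ x y : W, J₁ (x : V) = (y : V) →
            φ y = (Real.cos θ • qI + Real.sin θ • qK) * φ x)))

lemma skew_of_isometry {J : V →ₗ[ℝ] V} (hiso : ∀ v, ‖J v‖ = ‖v‖) (hsq : ∀ v, J (J v) = -v)
    (x y : V) : ⟪J x, y⟫ = -⟪x, J y⟫ := by
  have h : ⟪J x, J (J y)⟫ = ⟪x, J y⟫ := LinearIsometry.inner_map_map ⟨J, hiso⟩ x (J y)
  rw [hsq, inner_neg_right] at h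
  linarith

lemma inner_self_of_skew {J : V →ₗ[ℝ] V} (hs : ∀ x y, ⟪J x, y⟫ = -⟪x, J y⟫) (x : V) :
    ⟪x, J x⟫ = 0 := by
  have := hs x x
  rw [real_inner_comm] at this
  linarith

/-- A unit vector `v` on which two skew operators `J`, `K` satisfy the quaternion relations
generates an isometric copy of `ℍ`, with `v` corresponding to `1` and `J`, `K` to left
multiplication by `i`, `k`; the copy is contained in every invariant subspace containing `v`. -/
lemma exists_quaternion_embedding {J K : V →ₗ[ℝ] V}
    (hJ : ∀ x y, ⟪J x, y⟫ = -⟪x, J y⟫) (hK : ∀ x y, ⟪K x, y⟫ = -⟪x, K y⟫)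
    (hJJ : ∀ x, J (J x) = -x) {v : V} (hv : ‖v‖ = 1)
    (hKK : K (K v) = -v) (hKKJ : K (K (J v)) = -J v) (hKJ : K (J v) = -J (K v))
    {U : Submodule ℝ V} (hvU : v ∈ U) (hJU : ∀ x ∈ U, J x ∈ U) (hKU : ∀ x ∈ U, K x ∈ U) :
    ∃ ψ : ℍ[ℝ] →ₗᵢ[ℝ] V, (∀ q, J (ψ q) = ψ (qI * q)) ∧ (∀ q, K (ψ q) = ψ (qK * q)) ∧
      ∀ q, ψ q ∈ U := by
  have vv : ⟪v, v⟫ = 1 := by rw [real_inner_self_eq_norm_sq, hv]; norm_num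
  have JJ : ⟪J v, J v⟫ = 1 := by rw [hJ, hJJ, inner_neg_right, vv]; norm_num
  have KK : ⟪K v, K v⟫ = 1 := by rw [hK, hKK, inner_neg_right, vv]; norm_num
  have LL : ⟪K (J v), K (J v)⟫ = 1 := by rw [hK, hKKJ, inner_neg_right, JJ]; norm_num
  have vJ := inner_self_of_skew hJ v
  have vK := inner_self_of_skew hK v
  have JL := inner_self_of_skew hK (J v)
  have vL : ⟪v, K (J v)⟫ = 0 := by
    have h1 := hK v (J v)
    have h2 := hJ (K v) v
    have h3 : ⟪J (K v), v⟫ = -⟪v, K (J v)⟫ := by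
      rw [hKJ, inner_neg_right, real_inner_comm, neg_neg]
    linarith
  have JK : ⟪J v, K v⟫ = 0 := by
    rw [real_inner_comm, hK, vL, neg_zero]
  have LK : ⟪K (J v), K v⟫ = 0 := by
    rw [hK, hKK, inner_neg_right, real_inner_comm, vJ]; norm_num
  let f : ℍ[ℝ] →ₗ[ℝ] V :=
    { toFun := fun q => q.re • v + q.imI • J v + q.imJ • K (J v) + q.imK • K v
      map_add' := fun p q => by simp only [Quaternion.re_add, Quaternion.imI_add,
        Quaternion.imJ_add, Quaternion.imK_add]; module
      map_smul' := fun r q => by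
        simp only [Quaternion.re_smul, Quaternion.imI_smul,
          Quaternion.imJ_smul, Quaternion.imK_smul, RingHom.id_apply, smul_eq_mul]; module }
  have hf (q : ℍ[ℝ]) : f q = q.re • v + q.imI • J v + q.imJ • K (J v) + q.imK • K v := rfl
  have hJK : J (K v) = -K (J v) := by rw [hKJ, neg_neg]
  have hJL : J (K (J v)) = K v := by rw [hKJ, map_neg, hJJ, neg_neg]
  refine ⟨⟨f, fun q => ?_⟩, fun q => ?_, fun q => ?_, fun q => ?_⟩
  · change ‖f q‖ = ‖q‖
    have h : ‖f q‖ * ‖f q‖ = ‖q‖ * ‖q‖ := by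
      rw [← real_inner_self_eq_norm_mul_norm, ← Quaternion.normSq_eq_norm_mul_self,
        Quaternion.normSq_def', hf]
      simp only [inner_add_left, inner_add_right, inner_smul_left, inner_smul_right, conj_trivial,
        vv, JJ, KK, LL, vJ, vK, vL, JK, JL, LK, real_inner_comm v, real_inner_comm (J v) (K v),
        real_inner_comm (J v) (K (J v)), real_inner_comm (K (J v)) (K v)]
      ring
    exact (mul_self_inj (norm_nonneg _) (norm_nonneg _)).1 h
  · change J (f q) = f (qI * q)
    simp only [hf, map_add, map_smul, hJJ, hJK, hJL]
    simp only [Quaternion.re_mul, Quaternion.imI_mul, Quaternion.imJ_mul, Quaternion.imK_mul]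
    simp only [qI]
    module
  · change K (f q) = f (qK * q)
    simp only [hf, map_add, map_smul, hKK, hKKJ]
    simp only [Quaternion.re_mul, Quaternion.imI_mul, Quaternion.imJ_mul, Quaternion.imK_mul]
    simp only [qK]
    module
  · exact U.add_mem (U.add_mem (U.add_mem (U.smul_mem _ hvU) (U.smul_mem _ (hJU _ hvU)))
      (U.smul_mem _ (hKU _ (hJU _ hvU)))) (U.smul_mem _ (hKU _ hvU))

/-- The quaternionic case: an eigenvector of `J₀ J₁ + J₁ J₀` for an eigenvalue `-2c` with `|c| < 1`
lies in a four-dimensional block. -/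
lemma exists_block_four {J₀ J₁ : V →ₗ[ℝ] V}
    (h₀ : ∀ x y, ⟪J₀ x, y⟫ = -⟪x, J₀ y⟫) (h₁ : ∀ x y, ⟪J₁ x, y⟫ = -⟪x, J₁ y⟫)
    (s₀ : ∀ x, J₀ (J₀ x) = -x) (s₁ : ∀ x, J₁ (J₁ x) = -x)
    {U : Submodule ℝ V} (U₀ : ∀ x ∈ U, J₀ x ∈ U) (U₁ : ∀ x ∈ U, J₁ x ∈ U)
    {v : V} (hvU : v ∈ U) (hv : ‖v‖ = 1) {c : ℝ} (hc1 : -1 < c) (hc2 : c < 1)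
    (hS : J₁ (J₀ v) = -(2 * c) • v - J₀ (J₁ v)) :
    ∃ W ≤ U, W ≠ ⊥ ∧ IsBlock J₀ J₁ W := by
  set θ := Real.arccos c with hθ
  have hcos : Real.cos θ = c := Real.cos_arccos hc1.le hc2.le
  have hθ0 : 0 < θ := Real.arccos_pos.2 hc2
  have hθπ : θ < Real.pi := lt_of_le_of_ne (Real.arccos_le_pi c) fun h => by
    rw [h, Real.cos_pi] at hcos; linarith
  have hsin : 0 < Real.sin θ := Real.sin_pos_of_pos_of_lt_pi hθ0 hθπ
  have hsc : Real.sin θ ^ 2 = 1 - c ^ 2 := by rw [Real.sin_sq, hcos]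
  set s := Real.sin θ
  let K : V →ₗ[ℝ] V := s⁻¹ • (J₁ - c • J₀)
  have hKdef (x : V) : K x = s⁻¹ • (J₁ x - c • J₀ x) := rfl
  have hK : ∀ x y, ⟪K x, y⟫ = -⟪x, K y⟫ := fun x y => by
    simp only [hKdef, inner_smul_left, inner_smul_right, inner_sub_left, inner_sub_right, h₀, h₁,
      conj_trivial]
    ring
  have hKU : ∀ x ∈ U, K x ∈ U := fun x hx =>
    U.smul_mem _ (U.sub_mem (U₁ x hx) (U.smul_mem _ (U₀ x hx)))
  -- The relation `K² = -1` on the whole eigenspace.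
  have key (x : V) (hx : J₁ (J₀ x) = -(2 * c) • x - J₀ (J₁ x)) : K (K x) = -x := by
    have : K (K x) = (s⁻¹ * s⁻¹ * (c ^ 2 - 1)) • x := by
      simp only [hKdef, map_smul, map_sub, s₀, s₁, hx]
      module
    rw [this, show c ^ 2 - 1 = -s ^ 2 by rw [hsc]; ring]
    rw [show s⁻¹ * s⁻¹ * -s ^ 2 = -1 by field_simp, neg_one_smul]
  have hKJ : K (J₀ v) = -J₀ (K v) := by
    simp only [hKdef, map_smul, map_sub, s₀, hS]
    module
  have hS' : J₁ (J₀ (J₀ v)) = -(2 * c) • J₀ v - J₀ (J₁ (J₀ v)) := by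
    simp only [hS, s₀, map_sub, map_neg, map_smul]
    module
  obtain ⟨ψ, hψ0, hψK, hψU⟩ := exists_quaternion_embedding h₀ hK s₀ hv (key v hS) (key _ hS') hKJ
    hvU U₀ hKU
  have hJ₁ (x : V) : J₁ x = c • J₀ x + s • K x := by
    rw [hKdef, smul_inv_smul₀ hsin.ne']; abel
  have hψ1 (q : ℍ[ℝ]) : J₁ (ψ q) = ψ ((Real.cos θ • qI + s • qK) * q) := by
    rw [hJ₁, hψ0, hψK, hcos, add_mul, map_add, smul_mul_assoc, smul_mul_assoc, map_smul, map_smul]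
  have hsymm (q : ℍ[ℝ]) (y : LinearMap.range ψ.toLinearMap) (h : ψ q = y) :
      ψ.equivRange.symm y = q := by
    rw [LinearIsometryEquiv.symm_apply_eq]
    exact Subtype.ext h.symm
  have hrank : Module.finrank ℝ (LinearMap.range ψ.toLinearMap) = 4 := by
    rw [LinearMap.finrank_range_of_inj ψ.injective, Quaternion.finrank_eq_four]
  refine ⟨LinearMap.range ψ.toLinearMap, ?_, ?_, ?_, ?_, Or.inr ⟨hrank, θ, ⟨hθ0, hθπ⟩,
    ψ.equivRange.symm, ?_, ?_⟩⟩
  · rintro _ ⟨q, rfl⟩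
    exact hψU q
  · intro h
    rw [h, finrank_bot] at hrank
    norm_num at hrank
  · rintro _ ⟨q, rfl⟩
    exact ⟨_, (hψ0 q).symm⟩
  · rintro _ ⟨q, rfl⟩
    exact ⟨_, (hψ1 q).symm⟩
  · rintro ⟨_, q, rfl⟩ y hxy
    rw [hsymm q ⟨_, q, rfl⟩ rfl]
    exact hsymm _ _ ((hψ0 q).symm.trans hxy)
  · rintro ⟨_, q, rfl⟩ y hxy
    rw [hsymm q ⟨_, q, rfl⟩ rfl]
    exact hsymm _ _ ((hψ1 q).symm.trans hxy)

/-- The degenerate case: `v` and `J₀ v` span a two-dimensional block when `J₁ = ε J₀` on both,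
with `ε = ±1`. -/
lemma exists_block_two {J₀ J₁ : V →ₗ[ℝ] V}
    (h₀ : ∀ x y, ⟪J₀ x, y⟫ = -⟪x, J₀ y⟫) (s₀ : ∀ x, J₀ (J₀ x) = -x)
    {U : Submodule ℝ V} (U₀ : ∀ x ∈ U, J₀ x ∈ U)
    {v : V} (hvU : v ∈ U) (hv : ‖v‖ = 1) {ε : ℝ} (hε : ε = 1 ∨ ε = -1)
    (hv1 : J₁ v = ε • J₀ v) (hJv1 : J₁ (J₀ v) = ε • J₀ (J₀ v)) :
    ∃ W ≤ U, W ≠ ⊥ ∧ IsBlock J₀ J₁ W := by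
  have vv : ⟪v, v⟫ = 1 := by rw [real_inner_self_eq_norm_sq, hv]; norm_num
  have hv0 : v ≠ 0 := fun h => by simp [h] at hv
  have hli : LinearIndependent ℝ ![v, J₀ v] := by
    rw [LinearIndependent.pair_iff' hv0]
    intro a ha
    have h1 := inner_self_of_skew h₀ v
    rw [← ha, inner_smul_right, vv, mul_one] at h1
    rw [h1, zero_smul] at ha
    have h2 := s₀ v
    rw [← ha, map_zero] at h2
    exact hv0 (neg_eq_zero.1 h2.symm)
  have hrank : Module.finrank ℝ (Submodule.span ℝ {v, J₀ v}) = 2 := by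
    have := finrank_span_eq_card hli
    rwa [Matrix.range_cons_cons_empty, Fintype.card_fin] at this
  have heq : ∀ x ∈ Submodule.span ℝ {v, J₀ v}, J₁ x = ε • J₀ x := by
    intro x hx
    obtain ⟨a, b, rfl⟩ := Submodule.mem_span_pair.1 hx
    simp only [map_add, map_smul, hv1, hJv1]
    module
  have hinv : ∀ x ∈ Submodule.span ℝ {v, J₀ v}, J₀ x ∈ Submodule.span ℝ {v, J₀ v} := by
    intro x hx
    obtain ⟨a, b, rfl⟩ := Submodule.mem_span_pair.1 hx
    refine Submodule.mem_span_pair.2 ⟨-b, a, ?_⟩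
    simp only [map_add, map_smul, s₀]
    module
  refine ⟨Submodule.span ℝ {v, J₀ v}, ?_, ?_, hinv, fun x hx => ?_, Or.inl ⟨hrank, ?_⟩⟩
  · rw [Submodule.span_le]
    rintro x (rfl | rfl)
    exacts [hvU, U₀ _ hvU]
  · intro h
    rw [h, finrank_bot] at hrank
    norm_num at hrank
  · rw [heq x hx]
    exact Submodule.smul_mem _ _ (hinv x hx)
  · rcases hε with rfl | rfl
    · exact Or.inl fun x hx => by rw [heq x hx, one_smul]
    · exact Or.inr fun x hx => by rw [heq x hx, neg_one_smul]

/-- Every nonzero invariant subspace contains a nonzero block, generated by an eigenvector of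
`J₀ J₁ + J₁ J₀`. -/
lemma exists_block [FiniteDimensional ℝ V] {J₀ J₁ : V →ₗ[ℝ] V}
    (n₀ : ∀ v, ‖J₀ v‖ = ‖v‖) (n₁ : ∀ v, ‖J₁ v‖ = ‖v‖)
    (s₀ : ∀ x, J₀ (J₀ x) = -x) (s₁ : ∀ x, J₁ (J₁ x) = -x)
    {U : Submodule ℝ V} (U₀ : ∀ x ∈ U, J₀ x ∈ U) (U₁ : ∀ x ∈ U, J₁ x ∈ U) (hU : U ≠ ⊥) :
    ∃ W ≤ U, W ≠ ⊥ ∧ IsBlock J₀ J₁ W := by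
  have h₀ := skew_of_isometry n₀ s₀
  have h₁ := skew_of_isometry n₁ s₁
  have hSU : ∀ x ∈ U, (J₀ ∘ₗ J₁ + J₁ ∘ₗ J₀) x ∈ U := fun x hx =>
    U.add_mem (U₀ _ (U₁ x hx)) (U₁ _ (U₀ x hx))
  have hsymm : (J₀ ∘ₗ J₁ + J₁ ∘ₗ J₀).IsSymmetric := fun x y => by
    simp only [LinearMap.add_apply, LinearMap.comp_apply, inner_add_left, inner_add_right, h₀, h₁]
    ring
  have : Nontrivial U := Submodule.nontrivial_iff_ne_bot.2 hU
  obtain ⟨w, hw⟩ :=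
    (hsymm.restrict_invariant hSU).hasEigenvalue_iSup_of_finiteDimensional.exists_hasEigenvector
  obtain ⟨μ, hμ⟩ : ∃ μ : ℝ, (J₀ ∘ₗ J₁ + J₁ ∘ₗ J₀) (w : V) = μ • (w : V) :=
    ⟨_, congrArg Subtype.val hw.apply_eq_smul⟩
  have hw0 : (w : V) ≠ 0 := fun h => hw.2 (Subtype.ext h)
  set v : V := ‖(w : V)‖⁻¹ • (w : V) with hvdef
  have hv : ‖v‖ = 1 := by
    rw [hvdef, norm_smul, norm_inv, norm_norm, inv_mul_cancel₀ (norm_ne_zero_iff.2 hw0)]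
  have hvU : v ∈ U := U.smul_mem _ w.2
  have hμv : J₀ (J₁ v) + J₁ (J₀ v) = μ • v := by
    have : (J₀ ∘ₗ J₁ + J₁ ∘ₗ J₀) v = μ • v := by rw [hvdef, map_smul, hμ, smul_comm]
    exact this
  obtain ⟨c, rfl⟩ : ∃ c, μ = -(2 * c) := ⟨-μ / 2, by ring⟩
  have hS : J₁ (J₀ v) = -(2 * c) • v - J₀ (J₁ v) := by rw [← hμv]; abel
  have vv : ⟪v, v⟫ = 1 := by rw [real_inner_self_eq_norm_sq, hv]; norm_num
  have hc : ⟪J₀ v, J₁ v⟫ = c := by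
    have h := congrArg (fun x => ⟪v, x⟫) hμv
    simp only [inner_add_right, inner_smul_right, vv] at h
    have e₀ := h₀ v (J₁ v)
    have e₁ := h₁ v (J₀ v)
    rw [real_inner_comm] at e₁
    linarith
  have a₀ : ‖J₀ v‖ = 1 := by rw [n₀, hv]
  have a₁ : ‖J₁ v‖ = 1 := by rw [n₁, hv]
  have hle : |c| ≤ 1 := by
    have := abs_real_inner_le_norm (J₀ v) (J₁ v)
    rwa [hc, a₀, a₁, mul_one] at this
  rw [abs_le] at hle
  have hdeg (ε : ℝ) (hε : ε = 1 ∨ ε = -1) (hcε : c = ε) : ∃ W ≤ U, W ≠ ⊥ ∧ IsBlock J₀ J₁ W := by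
    subst hcε
    have hcc : c * c = 1 := by rcases hε with h | h <;> rw [h] <;> norm_num
    have hv1 : J₁ v = c • J₀ v := by
      rw [← sub_eq_zero, ← inner_self_eq_zero (𝕜 := ℝ)]
      have e := real_inner_comm (J₀ v) (J₁ v)
      simp only [inner_sub_left, inner_sub_right, inner_smul_left, inner_smul_right,
        real_inner_self_eq_norm_sq, a₀, a₁, conj_trivial, e, hc]
      linarith
    refine exists_block_two h₀ s₀ U₀ hvU hv hε hv1 ?_
    rw [hS, hv1, map_smul, s₀]
    module
  rcases hle.1.eq_or_lt with h | h1
  · exact hdeg (-1) (Or.inr rfl) h.symm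
  rcases hle.2.eq_or_lt with h | h2
  · exact hdeg 1 (Or.inl rfl) h
  exact exists_block_four h₀ h₁ s₀ s₁ U₀ U₁ hvU hv h1 h2 hS

/-- Decomposition of an arbitrary invariant subspace, by induction on its dimension. -/
lemma exists_decomposition [FiniteDimensional ℝ V] {J₀ J₁ : V →ₗ[ℝ] V}
    (n₀ : ∀ v, ‖J₀ v‖ = ‖v‖) (n₁ : ∀ v, ‖J₁ v‖ = ‖v‖)
    (s₀ : ∀ x, J₀ (J₀ x) = -x) (s₁ : ∀ x, J₁ (J₁ x) = -x) (n : ℕ) :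
    ∀ U : Submodule ℝ V, (∀ x ∈ U, J₀ x ∈ U) → (∀ x ∈ U, J₁ x ∈ U) → Module.finrank ℝ U = n →
      ∃ (r : ℕ) (W : Fin r → Submodule ℝ V),
        (∀ i j, i ≠ j → W i ⟂ W j) ∧ (⨆ i, W i) = U ∧ ∀ i, IsBlock J₀ J₁ (W i) := by
  induction n using Nat.strong_induction_on with
  | _ n ih =>
    intro U U₀ U₁ hn
    by_cases hU : U = ⊥
    · exact ⟨0, Fin.elim0, fun i => i.elim0, by rw [hU, iSup_of_empty], fun i => i.elim0⟩
    obtain ⟨W, hWU, hW0, hW⟩ := exists_block n₀ n₁ s₀ s₁ U₀ U₁ hU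
    have hperp {J : V →ₗ[ℝ] V} (h : ∀ x y, ⟪J x, y⟫ = -⟪x, J y⟫) (hJW : ∀ x ∈ W, J x ∈ W)
        (hJU : ∀ x ∈ U, J x ∈ U) : ∀ x ∈ Wᗮ ⊓ U, J x ∈ Wᗮ ⊓ U := by
      rintro x ⟨hx, hxU⟩
      refine ⟨(Submodule.mem_orthogonal _ _).2 fun u hu => ?_, hJU x hxU⟩
      have := h u x
      rw [(Submodule.mem_orthogonal _ _).1 hx _ (hJW u hu)] at this
      linarith
    have hsup : W ⊔ Wᗮ ⊓ U = U := Submodule.sup_orthogonal_inf_of_hasOrthogonalProjection hWU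
    have hlt : Wᗮ ⊓ U < U := by
      refine lt_of_le_of_ne inf_le_right fun h => hW0 ?_
      have h1 : W ≤ Wᗮ := hWU.trans (inf_eq_right.1 h)
      rw [← le_bot_iff, ← Submodule.inf_orthogonal_eq_bot W]
      exact le_inf le_rfl h1
    obtain ⟨r, W', ho, hs, hb⟩ := ih _ (hn ▸ Submodule.finrank_lt_finrank_of_lt hlt) (Wᗮ ⊓ U)
      (hperp (skew_of_isometry n₀ s₀) hW.1 U₀) (hperp (skew_of_isometry n₁ s₁) hW.2.1 U₁) rfl
    have hWW' (i : Fin r) : W ⟂ W' i :=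
      (Submodule.isOrtho_orthogonal_right W).mono_right
        ((le_iSup W' i).trans (hs.le.trans inf_le_left))
    refine ⟨r + 1, Fin.cons W W', fun i j => ?_, ?_, fun i => ?_⟩
    · refine Fin.cases ?_ (fun i => ?_) i <;> refine Fin.cases ?_ (fun j => ?_) j
      · exact fun h => absurd rfl h
      · exact fun _ => hWW' j
      · exact fun _ => (hWW' i).symm
      · exact fun h => ho i j fun hij => h (by rw [hij])
    · rw [← hsup, ← hs]
      refine le_antisymm (iSup_le fun i => ?_) (sup_le ?_ (iSup_le fun i => ?_))
      · exact Fin.cases le_sup_left (fun i => le_sup_of_le_right (le_iSup W' i)) i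
      · exact le_iSup (Fin.cons W W' : Fin (r + 1) → Submodule ℝ V) 0
      · exact le_iSup (Fin.cons W W' : Fin (r + 1) → Submodule ℝ V) i.succ
    · exact Fin.cases hW hb i

end


/-- Classification of pairs of orthogonal complex structures: `V` decomposes as an
orthogonal direct sum of subspaces invariant under both structures, each of which is
either `2`-dimensional with `J₁ = ±J₀`, or `4`-dimensional and isometrically isomorphic
to `ℍ` with `J₀` acting as left multiplication by `i` and `J₁` as left multiplication by
`cos θ · i + sin θ · k` for some `θ ∈ (0,π)`. -/
theorem classification_pairs_orthogonal_complex_structures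
    (V : Type*) [NormedAddCommGroup V] [InnerProductSpace ℝ V] [FiniteDimensional ℝ V]
    (J₀ J₁ : V →ₗ[ℝ] V)
    (hJ₀iso : ∀ v, ‖J₀ v‖ = ‖v‖) (hJ₀sq : J₀ ∘ₗ J₀ = -LinearMap.id)
    (hJ₁iso : ∀ v, ‖J₁ v‖ = ‖v‖) (hJ₁sq : J₁ ∘ₗ J₁ = -LinearMap.id) :
    ∃ (r : ℕ) (W : Fin r → Submodule ℝ V),
      (∀ i j, i ≠ j → ∀ v ∈ W i, ∀ w ∈ W j, ⟪v, w⟫ = 0) ∧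
      (⨆ i, W i) = ⊤ ∧
      (∀ i, (∀ v ∈ W i, J₀ v ∈ W i) ∧ (∀ v ∈ W i, J₁ v ∈ W i) ∧
        ((Module.finrank ℝ (W i) = 2 ∧
            ((∀ v ∈ W i, J₁ v = J₀ v) ∨ (∀ v ∈ W i, J₁ v = -(J₀ v)))) ∨
         (Module.finrank ℝ (W i) = 4 ∧
            ∃ θ ∈ Set.Ioo (0 : ℝ) Real.pi, ∃ φ : (W i) ≃ₗᵢ[ℝ] ℍ[ℝ],
              (∀ x y : W i, J₀ (x : V) = (y : V) → φ y = qI * φ x) ∧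
              (∀ x y : W i, J₁ (x : V) = (y : V) →
                φ y = (Real.cos θ • qI + Real.sin θ • qK) * φ x)))) := by
  obtain ⟨r, W, ho, hs, hb⟩ := exists_decomposition hJ₀iso hJ₁iso
    (fun x => LinearMap.congr_fun hJ₀sq x) (fun x => LinearMap.congr_fun hJ₁sq x) _ ⊤
    (fun _ _ => Submodule.mem_top) (fun _ _ => Submodule.mem_top) rfl
  exact ⟨r, W, fun i j hij v hv w hw => (ho i j hij).inner_eq hv hw, hs, hb⟩
end

section
/- Let V be a finite-dimensional real inner product space and let (J₀, J₁) and (J₀′, J₁′) be two pairs of orthogonal complex structures on V. If the characteristic polynomials of the ℝ-linear endomorphisms J₀ ∘ J₁ and J₀′ ∘ J₁′ coincide, then there exists an ℝ-linear isometric automorphism φ of V with φ ∘ J₀ = J₀′ ∘ φ and φ ∘ J₁ = J₁′ ∘ φ. -/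
/-!
Write `A = J₀ J₁` and `S = J₀ J₁ + J₁ J₀`. The product `A` is orthogonal with inverse `J₁ J₀`, so `S`
is self-adjoint, and `S v = t v` is equivalent to `A² v - t A v + v = 0`. If `v` is a unit vector with
`S v = t v`, then `W = span (v, J₀ v, J₁ v, J₀ J₁ v)` is stable under `J₀` and `J₁`; the Gram matrix of
these four vectors and the action of `J₀`, `J₁` on them depend on `t` only (`norm_orbitMap_sq`,
`apply_orbitMap₀`, `apply_orbitMap₁`). Hence the same `t` in two pairs gives isometric,
equivariantly identified subspaces `W` and `W'`, whatever linear relations the four vectors satisfy.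

The determinant of `A² - t A + 1` is `χ(λ) χ(μ)`, where `χ` is the characteristic polynomial of `A` and
`X² - t X + 1 = (X - λ) (X - μ)` over `ℂ`. So whether `t` is an eigenvalue of `S` is visible in `χ`
(`exists_quadratic_of_charpoly_eq`). By induction on the dimension
(`exists_intertwining_isometry`): an eigenvector of `S` exists by the spectral theorem, a matching
one exists for the second pair, the characteristic polynomial is multiplicative along `W ⊕ Wᗮ`, so
its factor on `W` cancels, and the induction hypothesis applies to the orthogonal complements.
-/

open scoped InnerProductSpace

universe u

/-! ### Orthogonal complex structures and the span of an orbit -/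

/-- Orthogonal complex structure: a norm-preserving linear map with square `-1`. -/
def IsOCS {V : Type*} [NormedAddCommGroup V] [InnerProductSpace ℝ V] (J : V →ₗ[ℝ] V) : Prop :=
  (∀ v, ‖J v‖ = ‖v‖) ∧ ∀ v, J (J v) = -v

section OCS

variable {V : Type*} [NormedAddCommGroup V] [InnerProductSpace ℝ V] {J J₀ J₁ : V →ₗ[ℝ] V}

theorem IsOCS.inner_map_map (h : IsOCS J) (x y : V) : ⟪J x, J y⟫_ℝ = ⟪x, y⟫_ℝ :=
  LinearIsometry.inner_map_map ⟨J, h.1⟩ x y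

theorem IsOCS.inner_left (h : IsOCS J) (x y : V) : ⟪J x, y⟫_ℝ = -⟪x, J y⟫_ℝ := by
  rw [← h.inner_map_map (J x) y, h.2, inner_neg_left]

theorem IsOCS.inner_self (h : IsOCS J) (x : V) : ⟪J x, x⟫_ℝ = 0 := by
  have := h.inner_left x x
  rw [real_inner_comm] at this
  rw [real_inner_comm]
  linarith

theorem IsOCS.restrict (h : IsOCS J) {W : Submodule ℝ V} (hW : ∀ x ∈ W, J x ∈ W) :
    IsOCS (J.restrict hW) :=
  ⟨fun v => h.1 v, fun v => Subtype.ext (h.2 v)⟩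

theorem IsOCS.orthogonal_mem (h : IsOCS J) {W : Submodule ℝ V} (hW : ∀ x ∈ W, J x ∈ W) :
    ∀ x ∈ Wᗮ, J x ∈ Wᗮ := by
  intro x hx
  rw [Submodule.mem_orthogonal'] at hx ⊢
  intro u hu
  rw [h.inner_left, hx _ (hW u hu), neg_zero]

/-- `A² v - t A v + v` is the image of `S v - t v` under the isometry `A = J₀ J₁`, whose inverse is
`J₁ J₀`. -/
theorem IsOCS.quadratic_iff (h₀ : IsOCS J₀) (h₁ : IsOCS J₁) (t : ℝ) (v : V) :
    J₀ (J₁ v) + J₁ (J₀ v) = t • v ↔ J₀ (J₁ (J₀ (J₁ v))) - t • J₀ (J₁ v) + v = 0 := by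
  have key : J₀ (J₁ (J₀ (J₁ v) + J₁ (J₀ v) - t • v)) =
      J₀ (J₁ (J₀ (J₁ v))) - t • J₀ (J₁ v) + v := by
    simp only [map_add, map_sub, map_smul, map_neg, h₀.2, h₁.2]
    module
  rw [← key, ← sub_eq_zero]
  constructor
  · intro h
    rw [h, map_zero, map_zero]
  · intro h
    rw [← norm_eq_zero, ← h₁.1, ← h₀.1, h, norm_zero]

theorem IsOCS.exists_eigenvector [FiniteDimensional ℝ V] [Nontrivial V]
    (h₀ : IsOCS J₀) (h₁ : IsOCS J₁) :
    ∃ (t : ℝ) (v : V), v ≠ 0 ∧ J₀ (J₁ v) + J₁ (J₀ v) = t • v := by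
  have hS : (J₀ ∘ₗ J₁ + J₁ ∘ₗ J₀).IsSymmetric := by
    intro x y
    simp only [LinearMap.add_apply, LinearMap.comp_apply, inner_add_left, inner_add_right,
      h₀.inner_left, h₁.inner_left, neg_neg]
    ring
  have hn := Module.finrank_pos (R := ℝ) (M := V)
  obtain ⟨v, hv⟩ := (hS.hasEigenvalue_eigenvalues rfl ⟨0, hn⟩).exists_hasEigenvector
  exact ⟨_, v, hv.2, hv.apply_eq_smul⟩

/-- The linear map sending the standard basis of `ℝ⁴` to `v`, `J₀ v`, `J₁ v`, `J₀ (J₁ v)`. -/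
def orbitMap (J₀ J₁ : V →ₗ[ℝ] V) (v : V) : (ℝ × ℝ × ℝ × ℝ) →ₗ[ℝ] V where
  toFun x := x.1 • v + x.2.1 • J₀ v + x.2.2.1 • J₁ v + x.2.2.2 • J₀ (J₁ v)
  map_add' x y := by simp only [Prod.fst_add, Prod.snd_add]; module
  map_smul' r x := by
    simp only [Prod.smul_fst, Prod.smul_snd, smul_eq_mul, RingHom.id_apply]; module

theorem orbitMap_apply (v : V) (a b c d : ℝ) :
    orbitMap J₀ J₁ v (a, b, c, d) = a • v + b • J₀ v + c • J₁ v + d • J₀ (J₁ v) := rfl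

theorem apply_orbitMap₀ (h₀ : IsOCS J₀) (v : V) (a b c d : ℝ) :
    J₀ (orbitMap J₀ J₁ v (a, b, c, d)) = orbitMap J₀ J₁ v (-b, a, -d, c) := by
  simp only [orbitMap_apply, map_add, map_smul, h₀.2]
  module

theorem apply_orbitMap₁ (h₁ : IsOCS J₁) {t : ℝ} {v : V}
    (hv : J₀ (J₁ v) + J₁ (J₀ v) = t • v) (a b c d : ℝ) :
    J₁ (orbitMap J₀ J₁ v (a, b, c, d)) =
      orbitMap J₀ J₁ v (t * b - c, d, a + t * d, -b) := by
  have e₁ : J₁ (J₀ v) = t • v - J₀ (J₁ v) := eq_sub_of_add_eq' hv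
  have e₂ : J₁ (J₀ (J₁ v)) = t • J₁ v + J₀ v := by
    have := congrArg J₁ hv
    rw [map_add, map_smul, h₁.2] at this
    rw [← this]; abel
  simp only [orbitMap_apply, map_add, map_smul, h₁.2, e₁, e₂]
  module

theorem norm_orbitMap_sq (h₀ : IsOCS J₀) (h₁ : IsOCS J₁) {t : ℝ} {v : V}
    (hv : J₀ (J₁ v) + J₁ (J₀ v) = t • v) (hn : ‖v‖ = 1) (a b c d : ℝ) :
    ‖orbitMap J₀ J₁ v (a, b, c, d)‖ ^ 2 =
      a ^ 2 + b ^ 2 + c ^ 2 + d ^ 2 + t * (a * d - b * c) := by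
  have n0 : ⟪v, v⟫_ℝ = 1 := by rw [real_inner_self_eq_norm_sq, hn, one_pow]
  have n1 : ⟪J₀ v, J₀ v⟫_ℝ = 1 := by rw [h₀.inner_map_map, n0]
  have n2 : ⟪J₁ v, J₁ v⟫_ℝ = 1 := by rw [h₁.inner_map_map, n0]
  have n3 : ⟪J₀ (J₁ v), J₀ (J₁ v)⟫_ℝ = 1 := by rw [h₀.inner_map_map, n2]
  have e1 : ⟪J₀ v, v⟫_ℝ = 0 := h₀.inner_self v
  have e2 : ⟪J₁ v, v⟫_ℝ = 0 := h₁.inner_self v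
  have e4 : ⟪J₁ v, J₀ v⟫_ℝ = -⟪J₀ (J₁ v), v⟫_ℝ := by rw [h₀.inner_left, neg_neg]
  have e5 : ⟪J₀ (J₁ v), J₀ v⟫_ℝ = 0 := by rw [h₀.inner_map_map, e2]
  have e6 : ⟪J₀ (J₁ v), J₁ v⟫_ℝ = 0 := h₀.inner_self _
  have e3 : ⟪J₀ (J₁ v), v⟫_ℝ = t / 2 := by
    have h := congrArg (fun w => ⟪w, v⟫_ℝ) hv
    simp only [inner_add_left, real_inner_smul_left, n0] at h
    rw [h₁.inner_left, real_inner_comm (J₁ v) (J₀ v), e4] at h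
    linarith
  rw [e3] at e4
  rw [← real_inner_self_eq_norm_sq, orbitMap_apply]
  simp only [inner_add_left, inner_add_right, real_inner_smul_left, real_inner_smul_right,
    n0, n1, n2, n3, real_inner_comm (J₀ v) v, real_inner_comm (J₁ v) v,
    real_inner_comm (J₀ (J₁ v)) v, real_inner_comm (J₁ v) (J₀ v),
    real_inner_comm (J₀ (J₁ v)) (J₀ v), real_inner_comm (J₀ (J₁ v)) (J₁ v),
    e1, e2, e3, e4, e5, e6]
  ring

end OCS

/-! ### Eigenvalues of `S` from the characteristic polynomial of `A` -/

/-- Over `ℂ` one has `X² - t X + 1 = (X - l) (X - m)`, so `det (A² - t A + 1)` is the product of the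
values at `l` and `m` of the characteristic polynomial of `A`. -/
theorem Matrix.det_quadratic_eq {n : Type*} [Fintype n] [DecidableEq n] (A : Matrix n n ℝ) (t : ℝ)
    {l m : ℂ} (hs : l + m = t) (hp : l * m = 1) :
    ((A * A - t • A + 1).det : ℂ) =
      (A.charpoly.map Complex.ofRealHom).eval l * (A.charpoly.map Complex.ofRealHom).eval m := by
  rw [← Matrix.charpoly_map, Matrix.eval_charpoly, Matrix.eval_charpoly, ← Matrix.det_mul]
  change Complex.ofRealHom _ = _
  rw [RingHom.map_det]
  congr 1
  set B := A.map Complex.ofRealHom with hB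
  have h1 : Complex.ofRealHom.mapMatrix (A * A - t • A + 1) = B * B - (t : ℂ) • B + 1 := by
    rw [map_add, map_sub, map_mul, map_one]
    congr 2
    ext i j
    simp [hB]
  rw [h1, ← hs, Matrix.scalar_apply, Matrix.scalar_apply, ← Matrix.smul_one_eq_diagonal,
    ← Matrix.smul_one_eq_diagonal]
  simp only [sub_mul, mul_sub, smul_sub, smul_mul_assoc, mul_smul_comm, one_mul, mul_one, smul_smul,
    mul_comm m l, hp, add_smul, one_smul]
  abel

theorem exists_complex_pair (t : ℝ) : ∃ l m : ℂ, l + m = t ∧ l * m = 1 := by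
  obtain ⟨s, hs⟩ := IsAlgClosed.exists_pow_nat_eq ((t : ℂ) ^ 2 - 4) two_pos
  refine ⟨(t + s) / 2, (t - s) / 2, by ring, ?_⟩
  linear_combination -hs / 4

theorem LinearMap.det_quadratic_eq {V : Type*} [AddCommGroup V] [Module ℝ V]
    [FiniteDimensional ℝ V] (A : Module.End ℝ V) (t : ℝ)
    {l m : ℂ} (hs : l + m = t) (hp : l * m = 1) :
    ((LinearMap.det (A * A - t • A + 1) : ℝ) : ℂ) =
      (A.charpoly.map Complex.ofRealHom).eval l * (A.charpoly.map Complex.ofRealHom).eval m := by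
  have b := Module.finBasis ℝ V
  rw [← LinearMap.charpoly_toMatrix A b, ← Matrix.det_quadratic_eq _ t hs hp,
    ← LinearMap.det_toMatrix b, map_add, map_sub, map_smul, LinearMap.toMatrix_mul,
    LinearMap.toMatrix_one]

/-- Solvability of `A² v - t A v + v = 0` in nonzero vectors depends only on the characteristic
polynomial of `A`. -/
theorem exists_quadratic_of_charpoly_eq {V V' : Type*} [AddCommGroup V] [Module ℝ V]
    [FiniteDimensional ℝ V] [AddCommGroup V'] [Module ℝ V'] [FiniteDimensional ℝ V']
    {A : V →ₗ[ℝ] V} {A' : V' →ₗ[ℝ] V'} (h : A.charpoly = A'.charpoly) {t : ℝ}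
    (hq : ∃ v : V, v ≠ 0 ∧ A (A v) - t • A v + v = 0) :
    ∃ v' : V', v' ≠ 0 ∧ A' (A' v') - t • A' v' + v' = 0 := by
  obtain ⟨l, m, hs, hp⟩ := exists_complex_pair t
  have hdet : LinearMap.det (A * A - t • A + 1) = LinearMap.det (A' * A' - t • A' + 1) := by
    apply Complex.ofReal_injective
    rw [LinearMap.det_quadratic_eq A t hs hp, LinearMap.det_quadratic_eq A' t hs hp, h]
  have h0 := ((LinearMap.hasEigenvalue_zero_tfae (A * A - t • A + 1)).out 5 3).1 hq
  rw [hdet] at h0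
  exact ((LinearMap.hasEigenvalue_zero_tfae (A' * A' - t • A' + 1)).out 3 5).1 h0

/-! ### Isometries between ranges and gluing along orthogonal complements -/

/-- Two linear maps out of the same space with the same pulled-back norm have isometric ranges; they
need not be injective, since they have the same kernel. -/
theorem exists_range_isometry {E V V' : Type*} [AddCommGroup E] [Module ℝ E]
    [NormedAddCommGroup V] [NormedSpace ℝ V] [NormedAddCommGroup V'] [NormedSpace ℝ V']
    (T : E →ₗ[ℝ] V) (T' : E →ₗ[ℝ] V') (h : ∀ x, ‖T x‖ = ‖T' x‖) :
    ∃ e : LinearMap.range T ≃ₗᵢ[ℝ] LinearMap.range T',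
      ∀ x, (e ⟨T x, LinearMap.mem_range_self T x⟩ : V') = T' x := by
  have hk : LinearMap.ker T = LinearMap.ker T' := by
    ext x
    rw [LinearMap.mem_ker, LinearMap.mem_ker, ← norm_eq_zero, h, norm_eq_zero]
  let e := T.quotKerEquivRange.symm ≪≫ₗ Submodule.quotEquivOfEq _ _ hk ≪≫ₗ T'.quotKerEquivRange
  have he : ∀ x, (e ⟨T x, LinearMap.mem_range_self T x⟩ : V') = T' x := by
    intro x
    have : T.quotKerEquivRange.symm ⟨T x, LinearMap.mem_range_self T x⟩ =
        Submodule.Quotient.mk x := by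
      rw [LinearEquiv.symm_apply_eq]; rfl
    simp only [e, LinearEquiv.trans_apply, this]
    rfl
  refine ⟨⟨e, ?_⟩, he⟩
  rintro ⟨_, x, rfl⟩
  change ‖(e ⟨T x, _⟩ : V')‖ = ‖T x‖
  rw [he, h]

/-- The characteristic polynomial is multiplicative along a decomposition into invariant
subspaces. -/
theorem charpoly_eq_mul_of_isCompl {V : Type*} [AddCommGroup V] [Module ℝ V]
    [FiniteDimensional ℝ V] (A : V →ₗ[ℝ] V) {W P : Submodule ℝ V} (hc : IsCompl W P)
    (hW : ∀ x ∈ W, A x ∈ W) (hP : ∀ x ∈ P, A x ∈ P) :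
    A.charpoly = (A.restrict hW).charpoly * (A.restrict hP).charpoly := by
  rw [← LinearMap.charpoly_prodMap,
    ← LinearEquiv.charpoly_conj (Submodule.prodEquivOfIsCompl W P hc)]
  congr 1
  ext x
  obtain ⟨y, rfl⟩ := (Submodule.prodEquivOfIsCompl W P hc).surjective x
  simp [LinearEquiv.conj_apply, Submodule.coe_prodEquivOfIsCompl']

/-- Isometries of a subspace and of its orthogonal complement glue to an isometry of the whole
space. -/
theorem exists_glued_isometry {V V' : Type*}
    [NormedAddCommGroup V] [InnerProductSpace ℝ V] [FiniteDimensional ℝ V]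
    [NormedAddCommGroup V'] [InnerProductSpace ℝ V']
    {W : Submodule ℝ V} {W' : Submodule ℝ V'}
    (f : W →ₗᵢ[ℝ] W') (g : Wᗮ →ₗᵢ[ℝ] W'ᗮ) :
    ∃ φ : V →ₗᵢ[ℝ] V', (∀ w : W, φ w = f w) ∧ ∀ p : Wᗮ, φ p = g p := by
  let e := Submodule.prodEquivOfIsCompl W Wᗮ W.isCompl_orthogonal
  let φ : V →ₗ[ℝ] V' :=
    (W'.subtype ∘ₗ f.toLinearMap).coprod (W'ᗮ.subtype ∘ₗ g.toLinearMap) ∘ₗ e.symm.toLinearMap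
  have hφ : ∀ (w : W) (p : Wᗮ), φ (w + p) = f w + g p := by
    intro w p
    have : e.symm (w + p) = (w, p) := by rw [LinearEquiv.symm_apply_eq]; rfl
    simp [φ, this]
  have hnorm : ∀ v, ‖φ v‖ = ‖v‖ := by
    intro v
    obtain ⟨⟨w, p⟩, rfl⟩ := e.surjective v
    change ‖φ (w + p)‖ = ‖(w : V) + p‖
    rw [hφ]
    have h1 := norm_add_sq_eq_norm_sq_add_norm_sq_real
      (W.inner_right_of_mem_orthogonal w.2 p.2)
    have h2 := norm_add_sq_eq_norm_sq_add_norm_sq_real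
      (W'.inner_right_of_mem_orthogonal (f w).2 (g p).2)
    have hf : ‖(f w : V')‖ = ‖(w : V)‖ := f.norm_map w
    have hg : ‖(g p : V')‖ = ‖(p : V)‖ := g.norm_map p
    rw [← mul_self_inj (norm_nonneg _) (norm_nonneg _), h1, h2, hf, hg]
  refine ⟨⟨φ, hnorm⟩, fun w => ?_, fun p => ?_⟩
  · simpa using hφ w 0
  · simpa using hφ 0 p

theorem intertwines_of_isCompl {V V' : Type*} [AddCommGroup V] [Module ℝ V]
    [AddCommGroup V'] [Module ℝ V'] {W P : Submodule ℝ V} (hc : IsCompl W P)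
    (φ : V →ₗ[ℝ] V') (J : V →ₗ[ℝ] V) (J' : V' →ₗ[ℝ] V')
    (hW : ∀ x ∈ W, φ (J x) = J' (φ x)) (hP : ∀ x ∈ P, φ (J x) = J' (φ x)) (v : V) :
    φ (J v) = J' (φ v) := by
  obtain ⟨w, hw, p, hp, rfl⟩ := Submodule.mem_sup.1 (hc.sup_eq_top ▸ Submodule.mem_top (x := v))
  simp only [map_add, hW w hw, hP p hp]

/-! ### Induction on the dimension -/

theorem exists_unit_eigenvector {V : Type*} [NormedAddCommGroup V] [InnerProductSpace ℝ V]
    {J₀ J₁ : V →ₗ[ℝ] V} {t : ℝ} (h : ∃ v : V, v ≠ 0 ∧ J₀ (J₁ v) + J₁ (J₀ v) = t • v) :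
    ∃ v : V, ‖v‖ = 1 ∧ J₀ (J₁ v) + J₁ (J₀ v) = t • v := by
  obtain ⟨v, hv, h⟩ := h
  refine ⟨‖v‖⁻¹ • v, norm_smul_inv_norm hv, ?_⟩
  simp only [map_smul, ← smul_add, h]
  rw [smul_comm]

/-- Unit vectors with the same eigenvalue of `J₀ J₁ + J₁ J₀` in two pairs generate invariant
subspaces that are isometric compatibly with the two structures. -/
theorem exists_invariant_isometry {V V' : Type*}
    [NormedAddCommGroup V] [InnerProductSpace ℝ V] [NormedAddCommGroup V'] [InnerProductSpace ℝ V']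
    {J₀ J₁ : V →ₗ[ℝ] V} {J₀' J₁' : V' →ₗ[ℝ] V'}
    (h₀ : IsOCS J₀) (h₁ : IsOCS J₁) (h₀' : IsOCS J₀') (h₁' : IsOCS J₁') {t : ℝ} {v : V} {v' : V'}
    (hv : ‖v‖ = 1) (hv' : ‖v'‖ = 1) (hS : J₀ (J₁ v) + J₁ (J₀ v) = t • v)
    (hS' : J₀' (J₁' v') + J₁' (J₀' v') = t • v') :
    ∃ (W : Submodule ℝ V) (W' : Submodule ℝ V')
      (hW₀ : ∀ x ∈ W, J₀ x ∈ W) (hW₁ : ∀ x ∈ W, J₁ x ∈ W)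
      (hW₀' : ∀ x ∈ W', J₀' x ∈ W') (hW₁' : ∀ x ∈ W', J₁' x ∈ W') (_ : v ∈ W) (e : W ≃ₗᵢ[ℝ] W'),
      (∀ w, e (J₀.restrict hW₀ w) = J₀'.restrict hW₀' (e w)) ∧
      ∀ w, e (J₁.restrict hW₁ w) = J₁'.restrict hW₁' (e w) := by
  let T := orbitMap J₀ J₁ v
  let T' := orbitMap J₀' J₁' v'
  obtain ⟨e, he⟩ := exists_range_isometry T T' (by
    rintro ⟨a, b, c, d⟩
    rw [← sq_eq_sq₀ (norm_nonneg _) (norm_nonneg _), norm_orbitMap_sq h₀ h₁ hS hv,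
      norm_orbitMap_sq h₀' h₁' hS' hv'])
  have hW₀ : ∀ x ∈ LinearMap.range T, J₀ x ∈ LinearMap.range T := by
    rintro _ ⟨⟨a, b, c, d⟩, rfl⟩
    exact ⟨_, (apply_orbitMap₀ h₀ v a b c d).symm⟩
  have hW₁ : ∀ x ∈ LinearMap.range T, J₁ x ∈ LinearMap.range T := by
    rintro _ ⟨⟨a, b, c, d⟩, rfl⟩
    exact ⟨_, (apply_orbitMap₁ h₁ hS a b c d).symm⟩
  have hW₀' : ∀ x ∈ LinearMap.range T', J₀' x ∈ LinearMap.range T' := by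
    rintro _ ⟨⟨a, b, c, d⟩, rfl⟩
    exact ⟨_, (apply_orbitMap₀ h₀' v' a b c d).symm⟩
  have hW₁' : ∀ x ∈ LinearMap.range T', J₁' x ∈ LinearMap.range T' := by
    rintro _ ⟨⟨a, b, c, d⟩, rfl⟩
    exact ⟨_, (apply_orbitMap₁ h₁' hS' a b c d).symm⟩
  have he₀ : ∀ w : LinearMap.range T, e (J₀.restrict hW₀ w) = J₀'.restrict hW₀' (e w) := by
    rintro ⟨_, ⟨a, b, c, d⟩, rfl⟩
    have h2 : J₀.restrict hW₀ ⟨T (a, b, c, d), LinearMap.mem_range_self T _⟩ =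
        ⟨T (-b, a, -d, c), LinearMap.mem_range_self T _⟩ :=
      Subtype.ext (apply_orbitMap₀ h₀ v a b c d)
    apply Subtype.ext
    rw [h2, he, LinearMap.coe_restrict_apply, he]
    exact (apply_orbitMap₀ h₀' v' a b c d).symm
  have he₁ : ∀ w : LinearMap.range T, e (J₁.restrict hW₁ w) = J₁'.restrict hW₁' (e w) := by
    rintro ⟨_, ⟨a, b, c, d⟩, rfl⟩
    have h2 : J₁.restrict hW₁ ⟨T (a, b, c, d), LinearMap.mem_range_self T _⟩ =
        ⟨T (t * b - c, d, a + t * d, -b), LinearMap.mem_range_self T _⟩ :=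
      Subtype.ext (apply_orbitMap₁ h₁ hS a b c d)
    apply Subtype.ext
    rw [h2, he, LinearMap.coe_restrict_apply, he]
    exact (apply_orbitMap₁ h₁' hS' a b c d).symm
  exact ⟨LinearMap.range T, LinearMap.range T', hW₀, hW₁, hW₀', hW₁',
    ⟨(1, 0, 0, 0), by simp [T, orbitMap_apply]⟩, e, he₀, he₁⟩

/-- The inductive form of the result. The two spaces are allowed to differ, since the induction passes to orthogonal complements of
different subspaces. -/
theorem exists_intertwining_isometry (n : ℕ) : ∀ {V V' : Type u}
    [NormedAddCommGroup V] [InnerProductSpace ℝ V] [FiniteDimensional ℝ V]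
    [NormedAddCommGroup V'] [InnerProductSpace ℝ V'] [FiniteDimensional ℝ V']
    {J₀ J₁ : V →ₗ[ℝ] V} {J₀' J₁' : V' →ₗ[ℝ] V'},
    Module.finrank ℝ V = n → IsOCS J₀ → IsOCS J₁ → IsOCS J₀' → IsOCS J₁' →
    (J₀ ∘ₗ J₁).charpoly = (J₀' ∘ₗ J₁').charpoly →
    ∃ φ : V →ₗᵢ[ℝ] V', (∀ v, φ (J₀ v) = J₀' (φ v)) ∧ ∀ v, φ (J₁ v) = J₁' (φ v) := by
  induction n using Nat.strong_induction_on with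
  | _ n ih =>
  intro V V' _ _ _ _ _ _ J₀ J₁ J₀' J₁' hn h₀ h₁ h₀' h₁' hcp
  rcases subsingleton_or_nontrivial V with hV | hV
  · refine ⟨⟨0, fun v => ?_⟩, fun v => ?_, fun v => ?_⟩
    · simp [Subsingleton.elim v 0]
    · simp [Subsingleton.elim v 0]
    · simp [Subsingleton.elim v 0]
  obtain ⟨t, hex⟩ := h₀.exists_eigenvector h₁
  have hex' : ∃ v : V', v ≠ 0 ∧ J₀' (J₁' v) + J₁' (J₀' v) = t • v := by
    simp only [h₀.quadratic_iff h₁, h₀'.quadratic_iff h₁'] at hex ⊢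
    exact exists_quadratic_of_charpoly_eq hcp hex
  obtain ⟨v, hv, hS⟩ := exists_unit_eigenvector hex
  obtain ⟨v', hv', hS'⟩ := exists_unit_eigenvector hex'
  obtain ⟨W, W', hW₀, hW₁, hW₀', hW₁', hmem, e, he₀, he₁⟩ :=
    exists_invariant_isometry h₀ h₁ h₀' h₁' hv hv' hS hS'
  have hP₀ := h₀.orthogonal_mem hW₀
  have hP₁ := h₁.orthogonal_mem hW₁
  have hP₀' := h₀'.orthogonal_mem hW₀'
  have hP₁' := h₁'.orthogonal_mem hW₁'
  have hcpP : (J₀.restrict hP₀ ∘ₗ J₁.restrict hP₁).charpoly =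
      (J₀'.restrict hP₀' ∘ₗ J₁'.restrict hP₁').charpoly := by
    have hcpW : (J₀.restrict hW₀ ∘ₗ J₁.restrict hW₁).charpoly =
        (J₀'.restrict hW₀' ∘ₗ J₁'.restrict hW₁').charpoly := by
      rw [← LinearEquiv.charpoly_conj e.toLinearEquiv]
      congr 1
      refine LinearMap.ext fun x => ?_
      obtain ⟨w, rfl⟩ := e.surjective x
      have h3 : e.toLinearEquiv.symm (e w) = w := e.symm_apply_apply w
      rw [LinearEquiv.conj_apply_apply, h3]
      change e (J₀.restrict hW₀ (J₁.restrict hW₁ w)) =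
        J₀'.restrict hW₀' (J₁'.restrict hW₁' (e w))
      rw [he₀, he₁]
    have h4 := charpoly_eq_mul_of_isCompl (J₀ ∘ₗ J₁) W.isCompl_orthogonal
      (fun x hx => hW₀ _ (hW₁ x hx)) (fun x hx => hP₀ _ (hP₁ x hx))
    have h5 := charpoly_eq_mul_of_isCompl (J₀' ∘ₗ J₁') W'.isCompl_orthogonal
      (fun x hx => hW₀' _ (hW₁' x hx)) (fun x hx => hP₀' _ (hP₁' x hx))
    rw [hcp, h5] at h4
    change (J₀'.restrict hW₀' ∘ₗ J₁'.restrict hW₁').charpoly *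
      (J₀'.restrict hP₀' ∘ₗ J₁'.restrict hP₁').charpoly =
      (J₀.restrict hW₀ ∘ₗ J₁.restrict hW₁).charpoly *
      (J₀.restrict hP₀ ∘ₗ J₁.restrict hP₁).charpoly at h4
    rw [hcpW] at h4
    exact (mul_left_cancel₀ (LinearMap.charpoly_monic _).ne_zero h4).symm
  have hlt : Module.finrank ℝ Wᗮ < n := by
    have hpos : 0 < Module.finrank ℝ W := by
      rw [Module.finrank_pos_iff_exists_ne_zero]
      refine ⟨⟨v, hmem⟩, fun h => ?_⟩
      have : v = 0 := congrArg Subtype.val h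
      simp [this] at hv
    have := W.finrank_add_finrank_orthogonal
    omega
  obtain ⟨g, hg₀, hg₁⟩ := ih _ hlt rfl (h₀.restrict hP₀) (h₁.restrict hP₁)
    (h₀'.restrict hP₀') (h₁'.restrict hP₁') hcpP
  obtain ⟨φ, hφW, hφP⟩ := exists_glued_isometry e.toLinearIsometry g
  refine ⟨φ, intertwines_of_isCompl W.isCompl_orthogonal φ.toLinearMap _ _ ?_ ?_,
    intertwines_of_isCompl W.isCompl_orthogonal φ.toLinearMap _ _ ?_ ?_⟩
  · intro x hx
    have h6 := congrArg Subtype.val (he₀ ⟨x, hx⟩)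
    exact (hφW (J₀.restrict hW₀ ⟨x, hx⟩)).trans (h6.trans (congrArg J₀' (hφW ⟨x, hx⟩).symm))
  · intro x hx
    have h6 := congrArg Subtype.val (hg₀ ⟨x, hx⟩)
    exact (hφP (J₀.restrict hP₀ ⟨x, hx⟩)).trans (h6.trans (congrArg J₀' (hφP ⟨x, hx⟩).symm))
  · intro x hx
    have h6 := congrArg Subtype.val (he₁ ⟨x, hx⟩)
    exact (hφW (J₁.restrict hW₁ ⟨x, hx⟩)).trans (h6.trans (congrArg J₁' (hφW ⟨x, hx⟩).symm))
  · intro x hx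
    have h6 := congrArg Subtype.val (hg₁ ⟨x, hx⟩)
    exact (hφP (J₁.restrict hP₁ ⟨x, hx⟩)).trans (h6.trans (congrArg J₁' (hφP ⟨x, hx⟩).symm))


/-- Two pairs of orthogonal complex structures on a finite-dimensional real inner product
space are isometrically isomorphic as soon as the characteristic polynomials of the
products `J₀ ∘ J₁` and `J₀′ ∘ J₁′` coincide. -/
theorem pairs_isomorphic_of_charpoly_eq
    (V : Type*) [NormedAddCommGroup V] [InnerProductSpace ℝ V] [FiniteDimensional ℝ V]
    (J₀ J₁ J₀' J₁' : V →ₗ[ℝ] V)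
    (hJ₀iso : ∀ v, ‖J₀ v‖ = ‖v‖) (hJ₀sq : J₀ ∘ₗ J₀ = -LinearMap.id)
    (hJ₁iso : ∀ v, ‖J₁ v‖ = ‖v‖) (hJ₁sq : J₁ ∘ₗ J₁ = -LinearMap.id)
    (hJ₀'iso : ∀ v, ‖J₀' v‖ = ‖v‖) (hJ₀'sq : J₀' ∘ₗ J₀' = -LinearMap.id)
    (hJ₁'iso : ∀ v, ‖J₁' v‖ = ‖v‖) (hJ₁'sq : J₁' ∘ₗ J₁' = -LinearMap.id)
    (hcp : (J₀ ∘ₗ J₁).charpoly = (J₀' ∘ₗ J₁').charpoly) :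
    ∃ φ : V ≃ₗᵢ[ℝ] V, (∀ v, φ (J₀ v) = J₀' (φ v)) ∧ (∀ v, φ (J₁ v) = J₁' (φ v)) := by
  have ocs : ∀ {J : V →ₗ[ℝ] V}, (∀ v, ‖J v‖ = ‖v‖) → J ∘ₗ J = -LinearMap.id → IsOCS J :=
    fun hiso hsq => ⟨hiso, fun v => LinearMap.congr_fun hsq v⟩
  obtain ⟨φ, h₀, h₁⟩ := exists_intertwining_isometry _ rfl (ocs hJ₀iso hJ₀sq) (ocs hJ₁iso hJ₁sq)
    (ocs hJ₀'iso hJ₀'sq) (ocs hJ₁'iso hJ₁'sq) hcp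
  exact ⟨φ.toLinearIsometryEquiv rfl, h₀, h₁⟩
end

section
/- Let θ, θ′ ∈ (0,π) and suppose there exists an ℝ-linear automorphism φ of ℍ such that φ(i·x) = i·φ(x) and φ((cos θ · i + sin θ · k)·x) = (cos θ′ · i + sin θ′ · k)·φ(x) for all x ∈ ℍ. Then θ = θ′. -/
/-!
For `u = cos θ · i + sin θ · k` the anticommutator `i u + u i` is the real scalar `-2 cos θ`
(`qI_anticomm`). A map intertwining left multiplication by `i` and by `u` with that by `i` and
by `u'` also intertwines these anticommutators, so it forces `cos θ = cos θ'`, and cosine is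
injective on `[0, π]`.
-/

open scoped Quaternion

/-- The anticommutator of `i` with the unit imaginary quaternion at angle `t` from it is the
real scalar `-2 cos t`. -/
theorem qI_anticomm (t : ℝ) (x : ℍ[ℝ]) :
    qI * ((Real.cos t • qI + Real.sin t • qK) * x) +
      (Real.cos t • qI + Real.sin t • qK) * (qI * x) = (-2 * Real.cos t) • x := by
  have h : qI * (Real.cos t • qI + Real.sin t • qK) +
      (Real.cos t • qI + Real.sin t • qK) * qI = (-2 * Real.cos t) • (1 : ℍ[ℝ]) := by
    -- Expand products before unfolding `qI` and `qK`, whose constructor form hides the type `ℍ[ℝ]`.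
    ext <;> simp only [Quaternion.re_add, Quaternion.imI_add, Quaternion.imJ_add,
      Quaternion.imK_add, Quaternion.re_mul, Quaternion.imI_mul, Quaternion.imJ_mul,
      Quaternion.imK_mul, Quaternion.re_smul, Quaternion.imI_smul, Quaternion.imJ_smul,
      Quaternion.imK_smul] <;> simp [qI, qK] <;> ring
  rw [← mul_assoc, ← mul_assoc, ← add_mul, h, smul_mul_assoc, one_mul]

/-- If `θ, θ′ ∈ (0,π)` and some `ℝ`-linear automorphism of `ℍ` intertwines left
multiplication by `i` with itself and left multiplication by `cos θ · i + sin θ · k` with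
left multiplication by `cos θ′ · i + sin θ′ · k`, then `θ = θ′`. -/
theorem theta_determined (θ θ' : ℝ) (hθ : θ ∈ Set.Ioo (0 : ℝ) Real.pi)
    (hθ' : θ' ∈ Set.Ioo (0 : ℝ) Real.pi) (φ : ℍ[ℝ] ≃ₗ[ℝ] ℍ[ℝ])
    (h1 : ∀ x, φ (qI * x) = qI * φ x)
    (h2 : ∀ x, φ ((Real.cos θ • qI + Real.sin θ • qK) * x) =
      (Real.cos θ' • qI + Real.sin θ' • qK) * φ x) :
    θ = θ' := by
  -- An intertwiner carries the anticommutator at `θ` to the one at `θ'`, so the scalars agree.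
  have h : (-2 * Real.cos θ) • φ 1 = (-2 * Real.cos θ') • φ 1 := by
    rw [← map_smul, ← qI_anticomm θ 1, map_add, h1, h2, h2, h1, qI_anticomm]
  have hne : φ 1 ≠ 0 := φ.map_ne_zero_iff.mpr one_ne_zero
  have hc := smul_left_injective ℝ hne h
  exact Real.injOn_cos (Set.Ioo_subset_Icc_self hθ) (Set.Ioo_subset_Icc_self hθ') (by linarith)
end

section
/- Let α, α′ be purely imaginary quaternions of norm 1. Then there exists an ℝ-linear isometric automorphism φ of ℍ satisfying φ(i·x) = i·φ(x) and φ(α·x) = α′·φ(x) for all x ∈ ℍ if and only if the real parts of i·α and of i·α′ are equal (equivalently, the components of α and α′ along i coincide). -/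
/-!
The quadratic form `⟪x, i·α·x⟫ = (i·α).re * ‖x‖²` is an invariant of the pair of left multiplications
by `i` and `α`, so an intertwining isometry forces the real parts of `i·α` and `i·α'` to agree.

Conversely, write `α = a·i + z·j` and `α' = a·i + z'·j` with `z, z' ∈ ℂ = ℝ ⊕ ℝ·i`. As both have
norm one, `‖z‖ = ‖z'‖`, so there is a unit complex number `w` with `w² z = z'`, that is,
`w z = conj w * z'`. Since `z' j w = conj w * z' j`, the unit quaternion `w` satisfies `w α = α' w`,
and it commutes with `i`; left multiplication by `w` is the required isometry.
-/

open scoped Quaternion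

@[simp] lemma qI_re : qI.re = 0 := rfl
@[simp] lemma qI_imI : qI.imI = 1 := rfl
@[simp] lemma qI_imJ : qI.imJ = 0 := rfl
@[simp] lemma qI_imK : qI.imK = 0 := rfl

lemma exists_unit_sq_mul_eq (z z' : ℂ) (h : ‖z‖ = ‖z'‖) :
    ∃ w : ℂ, ‖w‖ = 1 ∧ w ^ 2 * z = z' := by
  by_cases hz : z = 0
  · subst hz
    have hz' : z' = 0 := by simpa using h.symm
    exact ⟨1, by simp, by simp [hz']⟩
  · obtain ⟨w, hw⟩ := IsAlgClosed.exists_pow_nat_eq (z' / z) (n := 2) (by norm_num)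
    refine ⟨w, ?_, by rw [hw]; field_simp⟩
    have h1 : ‖w‖ ^ 2 = 1 := by
      rw [← norm_pow, hw, norm_div, ← h, div_self (norm_ne_zero_iff.mpr hz)]
    exact (pow_eq_one_iff_of_nonneg (norm_nonneg w) two_ne_zero).mp h1

/-- The quadratic form of left multiplication by `q` is `q.re` times the squared norm: the
imaginary part of `q` acts by a skew-symmetric map. -/
lemma inner_mul_self_right (q x : ℍ[ℝ]) : inner ℝ x (q * x) = q.re * ‖x‖ ^ 2 := by
  rw [sq, ← Quaternion.normSq_eq_norm_mul_self, Quaternion.inner_def, Quaternion.normSq_def']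
  simp
  ring

/-- Left multiplication by a unit quaternion, as a linear isometric automorphism of `ℍ`. -/
noncomputable def unitMulLeft (u : ℍ[ℝ]) (hu : ‖u‖ = 1) : ℍ[ℝ] ≃ₗᵢ[ℝ] ℍ[ℝ] :=
  LinearIsometry.toLinearIsometryEquiv
    ⟨LinearMap.mulLeft ℝ u, fun x => by simp [hu]⟩ rfl

lemma unitMulLeft_apply (u : ℍ[ℝ]) (hu : ‖u‖ = 1) (x : ℍ[ℝ]) : unitMulLeft u hu x = u * x := rfl

lemma sum_sq_eq_one {q : ℍ[ℝ]} (h : ‖q‖ = 1) :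
    q.re ^ 2 + q.imI ^ 2 + q.imJ ^ 2 + q.imK ^ 2 = 1 := by
  rw [← Quaternion.normSq_def', Quaternion.normSq_eq_norm_mul_self, h, one_mul]

/-- For unit imaginary quaternions `α, α′`, there is an isometric `ℝ`-linear automorphism
of `ℍ` intertwining left multiplication by `i` with itself and left multiplication by `α`
with left multiplication by `α′` if and only if `(i·α).re = (i·α′).re`, i.e. the
components of `α` and `α′` along `i` coincide. -/
theorem pairs_isomorphic_iff_same_i_component (α α' : ℍ[ℝ])
    (hα : α.re = 0) (hαn : ‖α‖ = 1) (hα' : α'.re = 0) (hα'n : ‖α'‖ = 1) :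
    (∃ φ : ℍ[ℝ] ≃ₗᵢ[ℝ] ℍ[ℝ],
        (∀ x, φ (qI * x) = qI * φ x) ∧ (∀ x, φ (α * x) = α' * φ x)) ↔
      (qI * α).re = (qI * α').re := by
  constructor
  · rintro ⟨φ, h1, h2⟩
    have h := φ.inner_map_map 1 (qI * α * 1)
    rw [mul_assoc, h1, h2, ← mul_assoc, ← mul_assoc, inner_mul_self_right,
      inner_mul_self_right, φ.norm_map] at h
    simpa using h.symm
  · intro h
    have hI : α.imI = α'.imI := by simpa using h
    have n2 := sum_sq_eq_one hα'n
    have n1 := sum_sq_eq_one hαn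
    -- `z = imJ + imK * i` since `z * j = imJ * j + imK * k`
    obtain ⟨w, hw, hwz⟩ := exists_unit_sq_mul_eq ⟨α.imJ, α.imK⟩ ⟨α'.imJ, α'.imK⟩ (by
      rw [← sq_eq_sq₀ (norm_nonneg _) (norm_nonneg _), ← Complex.normSq_eq_norm_sq,
        ← Complex.normSq_eq_norm_sq, Complex.normSq_mk, Complex.normSq_mk]
      rw [hα, hI] at n1
      rw [hα'] at n2
      linarith)
    have hw2 : w.re ^ 2 + w.im ^ 2 = 1 := by
      have := Complex.normSq_eq_norm_sq w
      rw [hw, Complex.normSq_apply] at this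
      linarith
    obtain ⟨u, u0, u1, u2, u3⟩ : ∃ u : ℍ[ℝ], u.re = w.re ∧ u.imI = w.im ∧ u.imJ = 0 ∧ u.imK = 0 :=
      ⟨⟨w.re, w.im, 0, 0⟩, rfl, rfl, rfl, rfl⟩
    have hu : ‖u‖ = 1 := by
      rw [← sq_eq_sq₀ (norm_nonneg _) zero_le_one, sq, ← Quaternion.normSq_eq_norm_mul_self,
        Quaternion.normSq_def']
      simpa [u0, u1, u2, u3] using hw2
    have hJ := congrArg Complex.re hwz
    have hK := congrArg Complex.im hwz
    simp only [sq, Complex.mul_re, Complex.mul_im] at hJ hK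
    have hcI : u * qI = qI * u := by
      ext <;> simp [u2, u3]
    have hcα : u * α = α' * u := by
      ext
      · simp [hα, hα', hI, u2, u3, mul_comm]
      · simp [hα, hα', hI, u2, u3, mul_comm]
      · simp only [Quaternion.imJ_mul, hα, hα', hI, u0, u1, u2, u3, ← hJ, ← hK]
        linear_combination (-(w.re * α.imJ - w.im * α.imK)) * hw2
      · simp only [Quaternion.imK_mul, hα, hα', hI, u0, u1, u2, u3, ← hJ, ← hK]
        linear_combination (-(w.re * α.imK + w.im * α.imJ)) * hw2
    refine ⟨unitMulLeft _ hu, fun x => ?_, fun x => ?_⟩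
    · rw [unitMulLeft_apply, unitMulLeft_apply, ← mul_assoc, hcI, mul_assoc]
    · rw [unitMulLeft_apply, unitMulLeft_apply, ← mul_assoc, hcα, mul_assoc]
end

section
/- Let θ ∈ (0,π) and let P be a real subspace of ℍ invariant under left multiplication by i and under left multiplication by cos θ · i + sin θ · k. Then P = 0 or P = ℍ. -/
/-!
Since `sin θ ≠ 0`, invariance under `i` and `cos θ · i + sin θ · k` gives invariance under `k`, hence
under `k * i = j`, and so under every quaternion: `P` is a left ideal (`mul_mem_of_qI_qK`). As `ℍ` is
a division ring, a nonzero `x ∈ P` yields every `y = (y * x⁻¹) * x` in `P`.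
-/

open scoped Quaternion

theorem mul_mem_of_qI_qK (P : Submodule ℝ ℍ[ℝ]) (hI : ∀ x ∈ P, qI * x ∈ P)
    (hK : ∀ x ∈ P, qK * x ∈ P) (q x : ℍ[ℝ]) (hx : x ∈ P) : q * x ∈ P := by
  -- The basis quaternion `j` is written as `k * i`.
  have hq : q = q.re • 1 + q.imI • qI + q.imJ • (qK * qI) + q.imK • qK := by
    have i0 : qI.re = 0 := rfl
    have i1 : qI.imI = 1 := rfl
    have i2 : qI.imJ = 0 := rfl
    have i3 : qI.imK = 0 := rfl
    have k0 : qK.re = 0 := rfl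
    have k1 : qK.imI = 0 := rfl
    have k2 : qK.imJ = 0 := rfl
    have k3 : qK.imK = 1 := rfl
    ext <;> simp [i0, i1, i2, i3, k0, k1, k2, k3]
  rw [hq, add_mul, add_mul, add_mul, smul_mul_assoc, smul_mul_assoc, smul_mul_assoc,
    smul_mul_assoc, one_mul, mul_assoc]
  exact P.add_mem (P.add_mem (P.add_mem (P.smul_mem _ hx) (P.smul_mem _ (hI x hx)))
    (P.smul_mem _ (hK _ (hI x hx)))) (P.smul_mem _ (hK x hx))

/-- A real subspace of `ℍ` invariant under left multiplication by `i` and by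
`cos θ · i + sin θ · k` (for some `θ ∈ (0,π)`) is trivial or all of `ℍ`. -/
theorem invariant_subspace_trivial (θ : ℝ) (hθ : θ ∈ Set.Ioo (0 : ℝ) Real.pi)
    (P : Submodule ℝ ℍ[ℝ])
    (h1 : ∀ x ∈ P, qI * x ∈ P)
    (h2 : ∀ x ∈ P, (Real.cos θ • qI + Real.sin θ • qK) * x ∈ P) :
    P = ⊥ ∨ P = ⊤ := by
  have hs : Real.sin θ ≠ 0 := (Real.sin_pos_of_mem_Ioo hθ).ne'
  have hK : ∀ x ∈ P, qK * x ∈ P := by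
    intro x hx
    have h := P.sub_mem (h2 x hx) (P.smul_mem (Real.cos θ) (h1 x hx))
    rw [add_mul, smul_mul_assoc, smul_mul_assoc, add_sub_cancel_left] at h
    exact (P.smul_mem_iff hs).1 h
  refine or_iff_not_imp_left.2 fun hP => ?_
  obtain ⟨x, hx, hx0⟩ := P.exists_mem_ne_zero_of_ne_bot hP
  refine P.eq_top_iff'.2 fun y => ?_
  have h := mul_mem_of_qI_qK P h1 hK (y * x⁻¹) x hx
  rwa [inv_mul_cancel_right₀ hx0] at h
end

section
/- Let m ≥ 0 and let θ : Fin m → ℝ be injective with 0 < θ(l) < π for all l. On V = (Fin m → ℍ) × ℂ, a real inner product space of dimension 4m+2, define J₀(v,z) = (l ↦ i·v(l), i·z) and J₁(v,z) = (l ↦ (cos θ(l) · i + sin θ(l) · k)·v(l), -i·z). Then for every integer k with 0 ≤ k ≤ 2m+1, the set of real subspaces P of V with dim P = 2k that are invariant under both J₀ and J₁ is finite, of cardinality σ(k, 2m+1) = binomial(m, ⌊k/2⌋). -/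
/-!
The anticommutator `J₀J₁ + J₁J₀` acts on the `l`-th copy of `ℍ` as the scalar `-2 cos θ(l)` and on
`ℂ` as the scalar `2`. Since `cos` is injective on `[0, π]` and `0 < θ(l) < π`, these scalars are
pairwise distinct, so by Lagrange interpolation the projection onto each block is a polynomial in
the anticommutator, and an invariant subspace `P` is the direct sum of its intersections with the
blocks (`single_mem_scaleAlgebra`).

Each block is irreducible: as `sin θ(l) ≠ 0`, the operators `J₀`, `J₁` generate on a copy of `ℍ` all
left multiplications (`block_mem`), and on `ℂ` the operator `J₀` is multiplication by `i`. Hence `P`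
is a coordinate subspace, `ℍ^S × ℂ` or `ℍ^S × 0` (`exists_eq_coordPlane`). Its dimension is
`4 |S| + 2` or `4 |S|`, so `dim P = 2k` means that `|S| = ⌊k/2⌋` and that `ℂ` occurs exactly when
`k` is odd; the count is the number of such subsets `S`.
-/

open scoped Quaternion

/-- The set of real subspaces of `ℍ^m × ℂ` of dimension `2k` invariant under
`J₀(v,z) = (l ↦ i·v(l), i·z)` and
`J₁(v,z) = (l ↦ (cos θ(l)·i + sin θ(l)·k)·v(l), -i·z)`. -/
def invariantPlanesCbar (m : ℕ) (θ : Fin m → ℝ) (k : ℕ) :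
    Set (Submodule ℝ ((Fin m → ℍ[ℝ]) × ℂ)) :=
  {P | Module.finrank ℝ P = 2 * k ∧
    (∀ p ∈ P, ((fun l => qI * p.1 l, Complex.I * p.2) : (Fin m → ℍ[ℝ]) × ℂ) ∈ P) ∧
    (∀ p ∈ P, ((fun l => (Real.cos (θ l) • qI + Real.sin (θ l) • qK) * p.1 l,
        (-Complex.I) * p.2) : (Fin m → ℍ[ℝ]) × ℂ) ∈ P)}

lemma qI_components : qI.re = 0 ∧ qI.imI = 1 ∧ qI.imJ = 0 ∧ qI.imK = 0 := ⟨rfl, rfl, rfl, rfl⟩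

lemma qK_components : qK.re = 0 ∧ qK.imI = 0 ∧ qK.imJ = 0 ∧ qK.imK = 1 := ⟨rfl, rfl, rfl, rfl⟩

/-- The block-diagonal operator on `ℍ^m × ℂ` that scales the `l`-th quaternionic factor by
`f (some l)` and the factor `ℂ` by `f none`. -/
noncomputable def blockScale {m : ℕ} (f : Option (Fin m) → ℝ) (p : (Fin m → ℍ[ℝ]) × ℂ) :
    (Fin m → ℍ[ℝ]) × ℂ :=
  (fun l => f (some l) • p.1 l, f none • p.2)

/-- The algebra of those tuples of scalars whose block-diagonal operator preserves `P`. -/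
noncomputable def scaleAlgebra {m : ℕ} (P : Submodule ℝ ((Fin m → ℍ[ℝ]) × ℂ)) :
    Subalgebra ℝ (Option (Fin m) → ℝ) where
  carrier := {f | ∀ p ∈ P, blockScale f p ∈ P}
  mul_mem' {f g} hf hg p hp := by
    have := hf _ (hg p hp)
    simpa [blockScale, mul_smul] using this
  add_mem' {f g} hf hg p hp := by
    have := P.add_mem (hf p hp) (hg p hp)
    convert this using 1
    ext1
    · funext l; exact add_smul _ _ _
    · exact add_smul _ _ _
  algebraMap_mem' r p hp := P.smul_mem r hp

/-- A subalgebra of functions on a finite set that contains an injective function contains the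
indicator of every point, by Lagrange interpolation. -/
lemma single_mem_of_injective {ι : Type*} [Fintype ι] [DecidableEq ι]
    (A : Subalgebra ℝ (ι → ℝ)) (c : ι → ℝ) (hc : c ∈ A) (hinj : Function.Injective c) (o : ι) :
    Pi.single o (1 : ℝ) ∈ A := by
  have key : ∏ o' ∈ Finset.univ.erase o, ((c o - c o')⁻¹ • (c - algebraMap ℝ _ (c o'))) ∈ A :=
    A.prod_mem fun o' _ => A.smul_mem (A.sub_mem hc (A.algebraMap_mem _)) _
  convert key using 1
  funext x
  rw [Finset.prod_apply]
  by_cases hx : x = o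
  · subst hx
    rw [Pi.single_eq_same, Finset.prod_eq_one]
    intro o' ho'
    have : c x - c o' ≠ 0 := sub_ne_zero.2 fun h => (Finset.ne_of_mem_erase ho') (hinj h).symm
    simp [this]
  · rw [Pi.single_eq_of_ne hx, eq_comm]
    apply Finset.prod_eq_zero (Finset.mem_erase.2 ⟨hx, Finset.mem_univ x⟩)
    simp

/-- The coordinate subspace `ℍ^S × ℂ` (if `b`) or `ℍ^S × 0` (otherwise). -/
noncomputable def coordPlane {m : ℕ} (S : Finset (Fin m)) (b : Prop) :
    Submodule ℝ ((Fin m → ℍ[ℝ]) × ℂ) where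
  carrier := {p | (∀ l, l ∉ S → p.1 l = 0) ∧ (¬ b → p.2 = 0)}
  add_mem' {p q} hp hq :=
    ⟨fun l hl => by simp [hp.1 l hl, hq.1 l hl], fun h => by simp [hp.2 h, hq.2 h]⟩
  zero_mem' := ⟨fun _ _ => rfl, fun _ => rfl⟩
  smul_mem' r p hp := ⟨fun l hl => by simp [hp.1 l hl], fun h => by simp [hp.2 h]⟩

lemma mem_coordPlane {m : ℕ} {S : Finset (Fin m)} {b : Prop} {p : (Fin m → ℍ[ℝ]) × ℂ} :
    p ∈ coordPlane S b ↔ (∀ l, l ∉ S → p.1 l = 0) ∧ (¬ b → p.2 = 0) := Iff.rfl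

open Classical in
lemma finrank_coordPlane {m : ℕ} (S : Finset (Fin m)) (b : Prop) :
    Module.finrank ℝ (coordPlane S b) = 4 * S.card + if b then 2 else 0 := by
  obtain ⟨E, hE⟩ : ∃ E : Submodule ℝ ℂ, E = if b then ⊤ else ⊥ := ⟨_, rfl⟩
  let g : ((S → ℍ[ℝ]) × E) →ₗ[ℝ]
      (Fin m → ℍ[ℝ]) × ℂ :=
    LinearMap.prodMap
      (LinearMap.pi fun l => if h : l ∈ S then LinearMap.proj (⟨l, h⟩ : S) else 0)
      E.subtype
  have hg : Function.Injective g := by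
    rintro ⟨v, z⟩ ⟨w, y⟩ h
    have h1 := congrArg Prod.fst h
    have h2 := congrArg Prod.snd h
    refine Prod.ext (funext fun l => ?_) (Subtype.ext h2)
    have := congrFun h1 l
    simpa [g] using this
  have hr : LinearMap.range g = coordPlane S b := by
    ext p
    rw [mem_coordPlane]
    constructor
    · rintro ⟨⟨v, z⟩, rfl⟩
      refine ⟨fun l hl => by simp [g, hl], fun hb => ?_⟩
      rw [if_neg hb] at hE
      exact (Submodule.mem_bot ℝ).1 (hE.le z.2)
    · rintro ⟨h1, h2⟩
      refine ⟨(fun l => p.1 l, ⟨p.2, ?_⟩), Prod.ext (funext fun l => ?_) rfl⟩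
      · by_cases hb : b
        · simp [hE, hb]
        · simp [hE, hb, h2 hb]
      · by_cases hl : l ∈ S
        · simp [g, hl]
        · simp [g, hl, h1 l hl]
  rw [← hr, LinearMap.finrank_range_of_inj hg, Module.finrank_prod, Module.finrank_pi_fintype]
  congr 1
  · simp [Quaternion.finrank_eq_four, mul_comm]
  · split_ifs at hE ⊢
    · rw [hE, finrank_top, Complex.finrank_real_complex]
    · rw [hE, finrank_bot]

/-- An invariant subspace absorbs the projections onto all blocks: the anticommutator
`J₀J₁ + J₁J₀` is the scalar `-2 cos θ(l)` on the `l`-th block and `2` on `ℂ`, and these scalars are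
pairwise distinct. -/
lemma single_mem_scaleAlgebra {m : ℕ} {θ : Fin m → ℝ}
    (hinj : Function.Injective θ) (hθ : ∀ l, θ l ∈ Set.Ioo (0 : ℝ) Real.pi)
    {P : Submodule ℝ ((Fin m → ℍ[ℝ]) × ℂ)}
    (h0 : ∀ p ∈ P, ((fun l => qI * p.1 l, Complex.I * p.2) : (Fin m → ℍ[ℝ]) × ℂ) ∈ P)
    (h1 : ∀ p ∈ P, ((fun l => (Real.cos (θ l) • qI + Real.sin (θ l) • qK) * p.1 l,
        (-Complex.I) * p.2) : (Fin m → ℍ[ℝ]) × ℂ) ∈ P) (o : Option (Fin m)) :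
    Pi.single o (1 : ℝ) ∈ scaleAlgebra P := by
  refine single_mem_of_injective _ (fun o => o.elim 2 fun l => -2 * Real.cos (θ l)) ?_ ?_ o
  · intro p hp
    have h := P.add_mem (h0 _ (h1 p hp)) (h1 _ (h0 p hp))
    convert h using 1
    refine Prod.ext (funext fun l => ?_) ?_
    · ext <;> simp [blockScale, qI_components, qK_components] <;> ring
    · simp only [blockScale, Option.elim, Prod.snd_add, Complex.real_smul]
      push_cast
      linear_combination (2 * p.2) * Complex.I_mul_I
  · have hcos : ∀ l, Real.cos (θ l) ≠ -1 := fun l h => by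
      have hl := hθ l
      have := Real.injOn_cos ⟨hl.1.le, hl.2.le⟩ ⟨Real.pi_pos.le, le_rfl⟩
        (h.trans Real.cos_pi.symm)
      exact hl.2.ne this
    rintro (_ | l) (_ | l') h
    · rfl
    · exact absurd (by simp only [Option.elim] at h; linarith) (hcos l')
    · exact absurd (by simp only [Option.elim] at h; linarith) (hcos l)
    · have h' : Real.cos (θ l) = Real.cos (θ l') := by
        simp only [Option.elim] at h; linarith
      have := Real.injOn_cos ⟨(hθ l).1.le, (hθ l).2.le⟩ ⟨(hθ l').1.le, (hθ l').2.le⟩ h'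
      rw [hinj this]

/-- On a block `ℍ` with `sin θ(l) ≠ 0`, the operators `J₀` and `J₁` generate all left
multiplications, so a nonzero vector of the block generates the whole block. -/
lemma block_mem {m : ℕ} {θ : Fin m → ℝ} (hθ : ∀ l, θ l ∈ Set.Ioo (0 : ℝ) Real.pi)
    {P : Submodule ℝ ((Fin m → ℍ[ℝ]) × ℂ)}
    (h0 : ∀ p ∈ P, ((fun l => qI * p.1 l, Complex.I * p.2) : (Fin m → ℍ[ℝ]) × ℂ) ∈ P)
    (h1 : ∀ p ∈ P, ((fun l => (Real.cos (θ l) • qI + Real.sin (θ l) • qK) * p.1 l,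
        (-Complex.I) * p.2) : (Fin m → ℍ[ℝ]) × ℂ) ∈ P) {l : Fin m} {q : ℍ[ℝ]} (hq : q ≠ 0)
    (hqP : ((Pi.single l q, 0) : (Fin m → ℍ[ℝ]) × ℂ) ∈ P) (x : ℍ[ℝ]) :
    ((Pi.single l x, 0) : (Fin m → ℍ[ℝ]) × ℂ) ∈ P := by
  let Q : Submodule ℝ ℍ[ℝ] :=
    P.comap ((LinearMap.inl ℝ (Fin m → ℍ[ℝ]) ℂ).comp (LinearMap.single ℝ (fun _ => ℍ[ℝ]) l))
  have hQ : ∀ y, y ∈ Q ↔ ((Pi.single l y, 0) : (Fin m → ℍ[ℝ]) × ℂ) ∈ P := fun _ => Iff.rfl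
  have hI : ∀ y ∈ Q, qI * y ∈ Q := fun y hy => by
    rw [hQ] at hy ⊢
    convert h0 _ hy using 1
    refine Prod.ext (funext fun l' => ?_) (by simp)
    by_cases h : l' = l
    · subst h; simp
    · simp [h]
  have hJ : ∀ y ∈ Q, (Real.cos (θ l) • qI + Real.sin (θ l) • qK) * y ∈ Q := fun y hy => by
    rw [hQ] at hy ⊢
    convert h1 _ hy using 1
    refine Prod.ext (funext fun l' => ?_) (by simp)
    by_cases h : l' = l
    · subst h; simp
    · simp [h]
  have hs : Real.sin (θ l) ≠ 0 := (Real.sin_pos_of_mem_Ioo (hθ l)).ne'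
  have hK : ∀ y ∈ Q, qK * y ∈ Q := fun y hy => by
    have h := Q.smul_mem (Real.sin (θ l))⁻¹
      (Q.sub_mem (hJ y hy) (Q.smul_mem (Real.cos (θ l)) (hI y hy)))
    rwa [add_mul, smul_mul_assoc, smul_mul_assoc, add_sub_cancel_left, inv_smul_smul₀ hs] at h
  have hall : ∀ a : ℍ[ℝ], ∀ y ∈ Q, a * y ∈ Q := fun a y hy => by
    have h := Q.add_mem (Q.add_mem (Q.smul_mem a.re hy) (Q.smul_mem a.imI (hI y hy)))
      (Q.add_mem (Q.smul_mem a.imJ (hK _ (hI y hy))) (Q.smul_mem a.imK (hK y hy)))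
    convert h using 1
    ext <;> simp [qI_components, qK_components] <;> ring
  have := hall (x * q⁻¹) q hqP
  rwa [inv_mul_cancel_right₀ hq] at this

lemma exists_eq_coordPlane {m : ℕ} {θ : Fin m → ℝ}
    (hinj : Function.Injective θ) (hθ : ∀ l, θ l ∈ Set.Ioo (0 : ℝ) Real.pi)
    {P : Submodule ℝ ((Fin m → ℍ[ℝ]) × ℂ)}
    (h0 : ∀ p ∈ P, ((fun l => qI * p.1 l, Complex.I * p.2) : (Fin m → ℍ[ℝ]) × ℂ) ∈ P)
    (h1 : ∀ p ∈ P, ((fun l => (Real.cos (θ l) • qI + Real.sin (θ l) • qK) * p.1 l,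
        (-Complex.I) * p.2) : (Fin m → ℍ[ℝ]) × ℂ) ∈ P) :
    ∃ (S : Finset (Fin m)) (b : Prop), P = coordPlane S b := by
  classical
  have hproj := single_mem_scaleAlgebra hinj hθ h0 h1
  have hl : ∀ p ∈ P, ∀ l, ((Pi.single l (p.1 l), 0) : (Fin m → ℍ[ℝ]) × ℂ) ∈ P := by
    intro p hp l
    convert hproj (some l) p hp using 1
    refine Prod.ext (funext fun l' => ?_) (by simp [blockScale])
    by_cases h : l' = l
    · subst h; simp [blockScale]
    · simp [blockScale, h]
  have hn : ∀ p ∈ P, ((0, p.2) : (Fin m → ℍ[ℝ]) × ℂ) ∈ P := by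
    intro p hp
    convert hproj none p hp using 1
    refine Prod.ext (funext fun l' => ?_) (by simp [blockScale])
    simp [blockScale]
  have hC : ∀ z : ℂ, z ≠ 0 → ((0, z) : (Fin m → ℍ[ℝ]) × ℂ) ∈ P →
      ∀ w : ℂ, ((0, w) : (Fin m → ℍ[ℝ]) × ℂ) ∈ P := by
    intro z hz hzP w
    have h := P.add_mem (P.smul_mem (w / z).re hzP) (P.smul_mem (w / z).im (h0 _ hzP))
    convert h using 1
    refine Prod.ext (funext fun l' => by simp) ?_
    simp only [Prod.snd_add, Prod.smul_snd, Complex.real_smul]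
    linear_combination (-z) * Complex.re_add_im (w / z) - div_mul_cancel₀ w hz
  refine ⟨Finset.univ.filter fun l => ((Pi.single l 1, 0) : (Fin m → ℍ[ℝ]) × ℂ) ∈ P,
    ((0, 1) : (Fin m → ℍ[ℝ]) × ℂ) ∈ P, ?_⟩
  ext p
  simp only [mem_coordPlane, Finset.mem_filter, Finset.mem_univ, true_and]
  constructor
  · intro hp
    refine ⟨fun l hnl => ?_, fun hnb => ?_⟩
    · by_contra hne
      exact hnl (block_mem hθ h0 h1 hne (hl p hp l) 1)
    · by_contra hne
      exact hnb (hC _ hne (hn p hp) 1)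
  · rintro ⟨hS, hb⟩
    have hsum : p = (∑ l, ((Pi.single l (p.1 l), 0) : (Fin m → ℍ[ℝ]) × ℂ)) + (0, p.2) := by
      refine Prod.ext ?_ ?_
      · rw [Prod.fst_add, Prod.fst_sum]
        simp [Finset.univ_sum_single]
      · rw [Prod.snd_add, Prod.snd_sum]
        simp
    rw [hsum]
    refine P.add_mem (P.sum_mem fun l _ => ?_) ?_
    · by_cases h : ((Pi.single l 1, 0) : (Fin m → ℍ[ℝ]) × ℂ) ∈ P
      · exact block_mem hθ h0 h1 one_ne_zero h _
      · rw [hS l h, Pi.single_zero]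
        exact P.zero_mem
    · by_cases h : ((0, 1) : (Fin m → ℍ[ℝ]) × ℂ) ∈ P
      · exact hC 1 one_ne_zero h _
      · rw [hb h]
        exact P.zero_mem

lemma coordPlane_injective {m : ℕ} (b : Prop) :
    Function.Injective fun S : Finset (Fin m) => coordPlane S b := by
  intro S S' h
  have key : ∀ (S : Finset (Fin m)) l,
      ((Pi.single l 1, 0) : (Fin m → ℍ[ℝ]) × ℂ) ∈ coordPlane S b ↔ l ∈ S := by
    intro S l
    rw [mem_coordPlane]
    constructor
    · rintro ⟨h, -⟩
      by_contra hl
      simpa using h l hl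
    · intro hl
      exact ⟨fun l' hl' => Pi.single_eq_of_ne (ne_of_mem_of_not_mem hl hl').symm _, fun _ => rfl⟩
  ext l
  rw [← key S, ← key S']
  exact iff_of_eq (congrArg (fun P => _ ∈ P) h)

lemma invariantPlanesCbar_eq_image {m : ℕ} {θ : Fin m → ℝ}
    (hinj : Function.Injective θ) (hθ : ∀ l, θ l ∈ Set.Ioo (0 : ℝ) Real.pi) (k : ℕ) :
    invariantPlanesCbar m θ k = (fun S : Finset (Fin m) => coordPlane S (Odd k)) ''
      (Finset.powersetCard (k / 2) (Finset.univ : Finset (Fin m))) := by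
  classical
  ext P
  simp only [Set.mem_image, Finset.mem_coe, Finset.mem_powersetCard, Finset.subset_univ, true_and]
  constructor
  · rintro ⟨hd, h0, h1⟩
    obtain ⟨S, b, rfl⟩ := exists_eq_coordPlane hinj hθ h0 h1
    rw [finrank_coordPlane] at hd
    -- `4 |S| + 2 [b] = 2 k` determines both `|S|` and the truth value of `b`.
    have hb : b = Odd k := by
      rw [Nat.odd_iff]
      refine propext ⟨fun h => ?_, fun h => ?_⟩
      · rw [if_pos h] at hd; omega
      · by_contra hb
        rw [if_neg hb] at hd; omega
    refine ⟨S, ?_, by rw [hb]⟩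
    split_ifs at hd <;> omega
  · rintro ⟨S, hS, rfl⟩
    refine ⟨?_, fun p hp => ?_, fun p hp => ?_⟩
    · rw [finrank_coordPlane, hS, Nat.odd_iff]
      split_ifs <;> omega
    · exact ⟨fun l hl => by simp [hp.1 l hl], fun h => by simp [hp.2 h]⟩
    · exact ⟨fun l hl => by simp [hp.1 l hl], fun h => by simp [hp.2 h]⟩

/-- For a generic pair of orthogonal complex structures on `ℍ^m × ℂ` of type
`ℍ_{θ₁} ⊕ ⋯ ⊕ ℍ_{θ_m} ⊕ ℂ̄`, the set of invariant `2k`-planes is finite of cardinality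
`σ(k, 2m+1) = binomial(m, ⌊k/2⌋)`. -/
theorem card_invariant_planes_plus_Cbar (m : ℕ) (θ : Fin m → ℝ)
    (hinj : Function.Injective θ) (hθ : ∀ l, θ l ∈ Set.Ioo (0 : ℝ) Real.pi)
    (k : ℕ) (hk : k ≤ 2 * m + 1) :
    (invariantPlanesCbar m θ k).Finite ∧
      ((invariantPlanesCbar m θ k).ncard : ℤ) = sigmaInt k (2 * m + 1) ∧
      (invariantPlanesCbar m θ k).ncard = m.choose (k / 2) := by
  have hcard : (invariantPlanesCbar m θ k).ncard = m.choose (k / 2) := by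
    rw [invariantPlanesCbar_eq_image hinj hθ, Set.ncard_image_of_injective _ (coordPlane_injective _),
      Set.ncard_coe_finset, Finset.card_powersetCard, Finset.card_fin]
  refine ⟨?_, ?_, hcard⟩
  · rw [invariantPlanesCbar_eq_image hinj hθ]
    exact (Finset.finite_toSet _).image _
  · have hA : ¬ ((k : ℤ) < 0 ∨ 2 * (m : ℤ) + 1 < k) := by omega
    have hB : ¬ (Odd (k : ℤ) ∧ Even (2 * (m : ℤ) + 1)) := by
      rintro ⟨-, h⟩
      rw [Int.even_iff] at h
      omega
    have h1 : ((2 * (m : ℤ) + 1) / 2).toNat = m := by omega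
    have h2 : ((k : ℤ) / 2).toNat = k / 2 := by omega
    rw [sigmaInt, if_neg hA, if_neg hB, h1, h2, hcard]
end

section
/- Let m ≥ 0 and let θ : Fin m → ℝ be injective with 0 < θ(l) < π for all l. On V = (Fin m → ℍ) × ℂ × ℂ, a real inner product space of dimension 4m+4 (so n = 2m+2), define J₀(v,z,w) = (l ↦ i·v(l), i·z, i·w) and J₁(v,z,w) = (l ↦ (cos θ(l) · i + sin θ(l) · k)·v(l), i·z, -i·w). Then for every integer k with 0 ≤ k ≤ 2m+2, the set of real subspaces P of V with dim P = 2k that are invariant under both J₀ and J₁ is finite, of cardinality σ(k, 2m+1) + σ(k-1, 2m+1). -/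
/-!
Write `J₀`, `J₁` for the two complex structures. The operator `T = -(J₀J₁ + J₁J₀)/2` acts as the
scalar `cos θ l` on the `l`-th copy of `ℍ`, as `1` on the first copy of `ℂ` and as `-1` on the
second. These scalars are pairwise distinct, so by Lagrange interpolation the projection to each
component is a polynomial in `T`, and an invariant subspace is the sum of its intersections with
the components (`function_mem`, `single_mem`, `fst_complex_mem`, `snd_complex_mem`).

Each component is irreducible: on `ℍ`, since `sin θ l ≠ 0`, the two structures generate left
multiplication by `i` and `k`, hence by all of `ℍ` (`quaternion_component_mem`); on `ℂ` multiplication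
by `i` suffices (`eq_top_of_I_mul_mem`). The invariant subspaces are therefore exactly the
`2 ^ (m + 2)` sums of components (`exists_componentSum_eq`). A sum of `c` quaternionic lines and
`d` complex lines has dimension `4 * c + 2 * d`, so `2 * k`-planes are counted by
`choose m (k / 2) + choose m (k / 2 - 1)` for even `k > 0`, by `2 * choose m (k / 2)` for odd `k`,
and by `1` for `k = 0` (`card_choices`).
-/

open scoped Quaternion

/-- The set of real subspaces of `ℍ^m × ℂ × ℂ` of dimension `2k` invariant under
`J₀(v,z,w) = (l ↦ i·v(l), i·z, i·w)` and
`J₁(v,z,w) = (l ↦ (cos θ(l)·i + sin θ(l)·k)·v(l), i·z, -i·w)`. -/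
def invariantPlanesCCbar (m : ℕ) (θ : Fin m → ℝ) (k : ℕ) :
    Set (Submodule ℝ ((Fin m → ℍ[ℝ]) × ℂ × ℂ)) :=
  {P | Module.finrank ℝ P = 2 * k ∧
    (∀ p ∈ P, ((fun l => qI * p.1 l, Complex.I * p.2.1, Complex.I * p.2.2) :
        (Fin m → ℍ[ℝ]) × ℂ × ℂ) ∈ P) ∧
    (∀ p ∈ P, ((fun l => (Real.cos (θ l) • qI + Real.sin (θ l) • qK) * p.1 l,
        Complex.I * p.2.1, (-Complex.I) * p.2.2) : (Fin m → ℍ[ℝ]) × ℂ × ℂ) ∈ P)}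

@[simp] lemma qK_re : qK.re = 0 := rfl
@[simp] lemma qK_imI : qK.imI = 0 := rfl
@[simp] lemma qK_imJ : qK.imJ = 0 := rfl
@[simp] lemma qK_imK : qK.imK = 1 := rfl

/-! ### Sums of components -/

/-- The sum of the components of `ℍ^m × ℂ × ℂ` selected by `(s, a, b)`: the quaternionic lines
indexed by `s`, the first `ℂ` if `a`, and the second `ℂ` if `b`. -/
def componentSum (m : ℕ) (x : Finset (Fin m) × Bool × Bool) :
    Submodule ℝ ((Fin m → ℍ[ℝ]) × ℂ × ℂ) where
  carrier := {p | (∀ l, l ∉ x.1 → p.1 l = 0) ∧ (x.2.1 = false → p.2.1 = 0) ∧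
    (x.2.2 = false → p.2.2 = 0)}
  zero_mem' := by simp
  add_mem' := by
    rintro p q ⟨h1, h2, h3⟩ ⟨g1, g2, g3⟩
    exact ⟨fun l hl => by simp [h1 l hl, g1 l hl], fun h => by simp [h2 h, g2 h],
      fun h => by simp [h3 h, g3 h]⟩
  smul_mem' := by
    rintro c p ⟨h1, h2, h3⟩
    exact ⟨fun l hl => by simp [h1 l hl], fun h => by simp [h2 h], fun h => by simp [h3 h]⟩

lemma mem_componentSum {m : ℕ} {x : Finset (Fin m) × Bool × Bool}
    {p : (Fin m → ℍ[ℝ]) × ℂ × ℂ} :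
    p ∈ componentSum m x ↔ (∀ l, l ∉ x.1 → p.1 l = 0) ∧ (x.2.1 = false → p.2.1 = 0) ∧
      (x.2.2 = false → p.2.2 = 0) := Iff.rfl

lemma componentSum_injective (m : ℕ) : Function.Injective (componentSum m) := by
  rintro ⟨s, a, b⟩ ⟨t, c, d⟩ h
  have key := fun p => (SetLike.ext_iff.mp h) p
  simp only [mem_componentSum] at key
  have hs : s = t := by
    ext l
    have := key (Pi.single l 1, 0, 0)
    have hmem : ∀ u : Finset (Fin m), (∀ j ∉ u, j ≠ l) ↔ l ∈ u := fun u =>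
      ⟨fun hu => by_contra fun hl => hu l hl rfl, fun hl j hj hjl => hj (hjl ▸ hl)⟩
    simpa [Pi.single_apply, ← hmem] using this
  have ha := key (0, 1, 0)
  have hb := key (0, 0, 1)
  simp at ha hb
  subst hs
  cases a <;> cases b <;> cases c <;> cases d <;> simp_all

lemma finrank_ite_complex (a : Bool) :
    Module.finrank ℝ (if a then ⊤ else ⊥ : Submodule ℝ ℂ) = if a then 2 else 0 := by
  cases a
  · simp
  · simp

lemma finrank_componentSum (m : ℕ) (x : Finset (Fin m) × Bool × Bool) :
    Module.finrank ℝ (componentSum m x) =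
      4 * x.1.card + (if x.2.1 then 2 else 0) + (if x.2.2 then 2 else 0) := by
  obtain ⟨s, a, b⟩ := x
  let e : componentSum m (s, a, b) ≃ₗ[ℝ]
      (s → ℍ[ℝ]) × (if a then ⊤ else ⊥ : Submodule ℝ ℂ) × (if b then ⊤ else ⊥ : Submodule ℝ ℂ) :=
    { toFun := fun p => (fun l => p.1.1 l,
        ⟨p.1.2.1, by have := p.2.2.1; cases a <;> simp_all⟩,
        ⟨p.1.2.2, by have := p.2.2.2; cases b <;> simp_all⟩)
      map_add' := fun _ _ => rfl
      map_smul' := fun _ _ => rfl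
      invFun := fun q => ⟨(fun l => if h : l ∈ s then q.1 ⟨l, h⟩ else 0, q.2.1, q.2.2),
        fun l hl => dif_neg hl,
        fun h => by simpa [show a = false from h] using q.2.1.2,
        fun h => by simpa [show b = false from h] using q.2.2.2⟩
      left_inv := by
        rintro ⟨⟨v, z, w⟩, hv, -, -⟩
        ext1
        refine Prod.ext (funext fun l => ?_) rfl
        by_cases h : l ∈ s
        · simp [h]
        · simpa [h] using (hv l h).symm
      right_inv := by
        rintro ⟨v, z, w⟩
        refine Prod.ext (funext fun l => ?_) rfl
        simp }
  rw [e.finrank_eq, Module.finrank_prod, Module.finrank_prod, finrank_ite_complex,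
    finrank_ite_complex, Module.finrank_pi_fintype]
  simp [Quaternion.finrank_eq_four, mul_comm, add_assoc]

lemma componentSum_mem_invariantPlanes (m : ℕ) (θ : Fin m → ℝ) (k : ℕ)
    (x : Finset (Fin m) × Bool × Bool)
    (hx : 4 * x.1.card + (if x.2.1 then 2 else 0) + (if x.2.2 then 2 else 0) = 2 * k) :
    componentSum m x ∈ invariantPlanesCCbar m θ k := by
  refine ⟨(finrank_componentSum m x).trans hx, ?_, ?_⟩ <;>
  · rintro p ⟨h1, h2, h3⟩
    exact ⟨fun l hl => by simp [h1 l hl], fun h => by simp [h2 h], fun h => by simp [h3 h]⟩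

/-! ### Classification of the invariant subspaces -/

section Classification

variable {m : ℕ} {θ : Fin m → ℝ} {k : ℕ} {P : Submodule ℝ ((Fin m → ℍ[ℝ]) × ℂ × ℂ)}

/-- The operator `-(J₀J₁ + J₁J₀)/2` acts on the components by the scalars `cos θ l`, `1`, `-1`,
so every invariant subspace is stable under it. -/
lemma scalar_mem (hP : P ∈ invariantPlanesCCbar m θ k) {p : (Fin m → ℍ[ℝ]) × ℂ × ℂ}
    (hp : p ∈ P) :
    ((fun l => Real.cos (θ l) • p.1 l, (1 : ℝ) • p.2.1, (-1 : ℝ) • p.2.2) :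
      (Fin m → ℍ[ℝ]) × ℂ × ℂ) ∈ P := by
  obtain ⟨-, h0, h1⟩ := hP
  have h := P.smul_mem (-1 / 2 : ℝ) (P.add_mem (h0 _ (h1 _ hp)) (h1 _ (h0 _ hp)))
  convert h using 1
  refine Prod.ext (funext fun l => ?_) (Prod.ext ?_ ?_)
  · ext <;> simp <;> ring
  · apply Complex.ext <;> simp <;> ring
  · apply Complex.ext <;> simp <;> ring

lemma polynomial_mem (hP : P ∈ invariantPlanesCCbar m θ k) (q : Polynomial ℝ) :
    ∀ p ∈ P, ((fun l => q.eval (Real.cos (θ l)) • p.1 l, q.eval 1 • p.2.1, q.eval (-1) • p.2.2) :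
      (Fin m → ℍ[ℝ]) × ℂ × ℂ) ∈ P := by
  induction q using Polynomial.induction_on with
  | C a =>
    intro p hp
    simp only [Polynomial.eval_C]
    exact P.smul_mem a hp
  | add q r hq hr =>
    intro p hp
    simp only [Polynomial.eval_add, add_smul]
    exact P.add_mem (hq p hp) (hr p hp)
  | monomial n a ih =>
    intro p hp
    have h := ih _ (scalar_mem hP hp)
    simp only [smul_smul] at h
    simpa only [pow_succ, ← mul_assoc, Polynomial.eval_mul, Polynomial.eval_X] using h

/-- By Lagrange interpolation, an invariant subspace is stable under every real function of the
operator `-(J₀J₁ + J₁J₀)/2`. -/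
lemma function_mem (hP : P ∈ invariantPlanesCCbar m θ k) (r : ℝ → ℝ)
    {p : (Fin m → ℍ[ℝ]) × ℂ × ℂ} (hp : p ∈ P) :
    ((fun l => r (Real.cos (θ l)) • p.1 l, r 1 • p.2.1, r (-1) • p.2.2) :
      (Fin m → ℍ[ℝ]) × ℂ × ℂ) ∈ P := by
  classical
  let S : Finset ℝ := insert 1 (insert (-1) (Finset.univ.image fun l => Real.cos (θ l)))
  have hq : ∀ x ∈ S, (Lagrange.interpolate S id r).eval x = r x := fun x hx =>
    Lagrange.eval_interpolate_at_node r Function.injective_id.injOn hx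
  have h := polynomial_mem hP (Lagrange.interpolate S id r) p hp
  have hl : ∀ l, (Lagrange.interpolate S id r).eval (Real.cos (θ l)) = r (Real.cos (θ l)) :=
    fun l => hq _ (by simp [S])
  simpa only [hl, hq 1 (by simp [S]), hq (-1) (by simp [S])] using h

lemma cos_ne_one {t : ℝ} (ht : t ∈ Set.Ioo (0 : ℝ) Real.pi) : Real.cos t ≠ 1 := by
  have := Real.cos_lt_cos_of_nonneg_of_le_pi le_rfl ht.2.le ht.1
  rw [Real.cos_zero] at this
  exact this.ne

lemma cos_ne_neg_one {t : ℝ} (ht : t ∈ Set.Ioo (0 : ℝ) Real.pi) : Real.cos t ≠ -1 := by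
  have := Real.cos_lt_cos_of_nonneg_of_le_pi ht.1.le le_rfl ht.2
  rw [Real.cos_pi] at this
  exact this.ne'

/-- Taking the indicator function of `cos (θ l)` as the function of the operator projects to the
`l`-th component: `cos` is injective on `[0, π]` and differs from `±1` on the interior. -/
lemma single_mem (hinj : Function.Injective θ) (hθ : ∀ l, θ l ∈ Set.Ioo (0 : ℝ) Real.pi)
    (hP : P ∈ invariantPlanesCCbar m θ k) {p : (Fin m → ℍ[ℝ]) × ℂ × ℂ} (hp : p ∈ P)
    (l : Fin m) : ((Pi.single l (p.1 l), 0, 0) : (Fin m → ℍ[ℝ]) × ℂ × ℂ) ∈ P := by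
  classical
  have h := function_mem hP (fun x => if x = Real.cos (θ l) then 1 else 0) hp
  convert h using 1
  refine Prod.ext (funext fun j => ?_) (Prod.ext ?_ ?_)
  · by_cases hj : j = l
    · subst hj; simp
    · have : Real.cos (θ j) ≠ Real.cos (θ l) := fun hc => hj <| hinj <|
        Real.injOn_cos (Set.Ioo_subset_Icc_self (hθ j)) (Set.Ioo_subset_Icc_self (hθ l)) hc
      simp [hj, this]
  · simp [(cos_ne_one (hθ l)).symm]
  · simp [(cos_ne_neg_one (hθ l)).symm]

lemma fst_complex_mem (hθ : ∀ l, θ l ∈ Set.Ioo (0 : ℝ) Real.pi)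
    (hP : P ∈ invariantPlanesCCbar m θ k) {p : (Fin m → ℍ[ℝ]) × ℂ × ℂ} (hp : p ∈ P) :
    ((0, p.2.1, 0) : (Fin m → ℍ[ℝ]) × ℂ × ℂ) ∈ P := by
  classical
  have h := function_mem hP (fun x => if x = 1 then 1 else 0) hp
  convert h using 1
  refine Prod.ext (funext fun j => ?_) (Prod.ext ?_ ?_)
  · simp [cos_ne_one (hθ j)]
  · simp
  · norm_num

lemma snd_complex_mem (hθ : ∀ l, θ l ∈ Set.Ioo (0 : ℝ) Real.pi)
    (hP : P ∈ invariantPlanesCCbar m θ k) {p : (Fin m → ℍ[ℝ]) × ℂ × ℂ} (hp : p ∈ P) :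
    ((0, 0, p.2.2) : (Fin m → ℍ[ℝ]) × ℂ × ℂ) ∈ P := by
  classical
  have h := function_mem hP (fun x => if x = -1 then 1 else 0) hp
  convert h using 1
  refine Prod.ext (funext fun j => ?_) (Prod.ext ?_ ?_)
  · simp [cos_ne_neg_one (hθ j)]
  · norm_num
  · simp

/-- A quaternionic component is irreducible: since `sin (θ l) ≠ 0`, the two complex structures
generate all left multiplications by quaternions, which act transitively on nonzero vectors. -/
lemma quaternion_component_mem (hθ : ∀ l, θ l ∈ Set.Ioo (0 : ℝ) Real.pi)
    (hP : P ∈ invariantPlanesCCbar m θ k) {l : Fin m} {v : ℍ[ℝ]} (hv : v ≠ 0)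
    (hvP : ((Pi.single l v, 0, 0) : (Fin m → ℍ[ℝ]) × ℂ × ℂ) ∈ P) (u : ℍ[ℝ]) :
    ((Pi.single l u, 0, 0) : (Fin m → ℍ[ℝ]) × ℂ × ℂ) ∈ P := by
  let Q : Submodule ℝ ℍ[ℝ] := P.comap
    ((LinearMap.inl ℝ (Fin m → ℍ[ℝ]) (ℂ × ℂ)).comp (LinearMap.single ℝ (fun _ => ℍ[ℝ]) l))
  have hQ : ∀ x, x ∈ Q ↔ ((Pi.single l x, 0, 0) : (Fin m → ℍ[ℝ]) × ℂ × ℂ) ∈ P :=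
    fun x => Iff.rfl
  have hI : ∀ x ∈ Q, qI * x ∈ Q := by
    intro x hx
    rw [hQ] at hx ⊢
    convert hP.2.1 _ hx using 1
    refine Prod.ext (funext fun j => ?_) (by simp)
    by_cases hj : j = l
    · subst hj; simp
    · simp [hj]
  have hJ : ∀ x ∈ Q, (Real.cos (θ l) • qI + Real.sin (θ l) • qK) * x ∈ Q := by
    intro x hx
    rw [hQ] at hx ⊢
    convert hP.2.2 _ hx using 1
    refine Prod.ext (funext fun j => ?_) (by simp)
    by_cases hj : j = l
    · subst hj; simp
    · simp [hj]
  have hsin : Real.sin (θ l) ≠ 0 := (Real.sin_pos_of_pos_of_lt_pi (hθ l).1 (hθ l).2).ne'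
  have hK : ∀ x ∈ Q, qK * x ∈ Q := by
    intro x hx
    have h := Q.smul_mem (Real.sin (θ l))⁻¹
      (Q.sub_mem (hJ x hx) (Q.smul_mem (Real.cos (θ l)) (hI x hx)))
    rwa [add_mul, smul_mul_assoc, smul_mul_assoc, add_sub_cancel_left,
      inv_smul_smul₀ hsin] at h
  have hall : ∀ a : ℍ[ℝ], ∀ x ∈ Q, a * x ∈ Q := by
    intro a x hx
    -- The missing basis vector is `j = k * i`.
    have ha : a * x = a.re • x + a.imI • (qI * x) + a.imJ • (qK * (qI * x)) +
        a.imK • (qK * x) := by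
      ext <;> simp <;> ring
    rw [ha]
    exact Q.add_mem (Q.add_mem (Q.add_mem (Q.smul_mem _ hx) (Q.smul_mem _ (hI x hx)))
      (Q.smul_mem _ (hK _ (hI x hx)))) (Q.smul_mem _ (hK x hx))
  have h := hall (u * v⁻¹) v hvP
  rw [inv_mul_cancel_right₀ hv] at h
  exact h

lemma eq_top_of_I_mul_mem (Q : Submodule ℝ ℂ) (hI : ∀ z ∈ Q, Complex.I * z ∈ Q) {z : ℂ}
    (hz : z ≠ 0) (hzQ : z ∈ Q) (u : ℂ) : u ∈ Q := by
  have h := Q.add_mem (Q.smul_mem (u * z⁻¹).re hzQ) (Q.smul_mem (u * z⁻¹).im (hI z hzQ))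
  have hu : (u * z⁻¹).re • z + (u * z⁻¹).im • (Complex.I * z) = u := by
    rw [Complex.real_smul, Complex.real_smul, ← mul_assoc, ← add_mul, Complex.re_add_im,
      inv_mul_cancel_right₀ hz]
  rwa [hu] at h

/-- Every invariant subspace is a sum of components. -/
lemma exists_componentSum_eq (hinj : Function.Injective θ)
    (hθ : ∀ l, θ l ∈ Set.Ioo (0 : ℝ) Real.pi) (hP : P ∈ invariantPlanesCCbar m θ k) :
    ∃ x, componentSum m x = P := by
  classical
  refine ⟨(Finset.univ.filter fun l => ∃ p ∈ P, p.1 l ≠ 0,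
    decide (∃ p ∈ P, p.2.1 ≠ 0), decide (∃ p ∈ P, p.2.2 ≠ 0)), le_antisymm ?_ ?_⟩
  · rintro ⟨v, z, w⟩ ⟨hv, hz, hw⟩
    simp only [Finset.mem_filter, Finset.mem_univ, true_and, decide_eq_false_iff_not] at hv hz hw
    have hv' : ∀ l, ((Pi.single l (v l), 0, 0) : (Fin m → ℍ[ℝ]) × ℂ × ℂ) ∈ P := by
      intro l
      by_cases h : ∃ p ∈ P, p.1 l ≠ 0
      · obtain ⟨p, hp, hpl⟩ := h
        exact quaternion_component_mem hθ hP hpl (single_mem hinj hθ hP hp l) _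
      · rw [hv l h, Pi.single_zero]
        exact P.zero_mem
    have hz' : ((0, z, 0) : (Fin m → ℍ[ℝ]) × ℂ × ℂ) ∈ P := by
      by_cases h : ∃ p ∈ P, p.2.1 ≠ 0
      · obtain ⟨p, hp, hpz⟩ := h
        refine eq_top_of_I_mul_mem (P.comap ((LinearMap.inr ℝ (Fin m → ℍ[ℝ]) (ℂ × ℂ)).comp
          (LinearMap.inl ℝ ℂ ℂ))) (fun y hy => ?_) hpz (fst_complex_mem hθ hP hp) z
        change ((0, y, 0) : (Fin m → ℍ[ℝ]) × ℂ × ℂ) ∈ P at hy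
        change ((0, Complex.I * y, 0) : (Fin m → ℍ[ℝ]) × ℂ × ℂ) ∈ P
        convert hP.2.1 _ hy using 1
        refine Prod.ext (funext fun j => ?_) (Prod.ext ?_ ?_) <;> simp
      · rw [hz h]
        exact P.zero_mem
    have hw' : ((0, 0, w) : (Fin m → ℍ[ℝ]) × ℂ × ℂ) ∈ P := by
      by_cases h : ∃ p ∈ P, p.2.2 ≠ 0
      · obtain ⟨p, hp, hpw⟩ := h
        refine eq_top_of_I_mul_mem (P.comap ((LinearMap.inr ℝ (Fin m → ℍ[ℝ]) (ℂ × ℂ)).comp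
          (LinearMap.inr ℝ ℂ ℂ))) (fun y hy => ?_) hpw (snd_complex_mem hθ hP hp) w
        change ((0, 0, y) : (Fin m → ℍ[ℝ]) × ℂ × ℂ) ∈ P at hy
        change ((0, 0, Complex.I * y) : (Fin m → ℍ[ℝ]) × ℂ × ℂ) ∈ P
        convert hP.2.1 _ hy using 1
        refine Prod.ext (funext fun j => ?_) (Prod.ext ?_ ?_) <;> simp
      · rw [hw h]
        exact P.zero_mem
    have hsum : ((v, z, w) : (Fin m → ℍ[ℝ]) × ℂ × ℂ) =
        (∑ l, (Pi.single l (v l), 0, 0)) + (0, z, 0) + (0, 0, w) := by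
      refine Prod.ext ?_ (Prod.ext ?_ ?_)
      · simp [Prod.fst_sum, Finset.univ_sum_single]
      · simp [Prod.snd_sum]
      · simp [Prod.snd_sum]
    rw [hsum]
    exact P.add_mem (P.add_mem (P.sum_mem fun l _ => hv' l) hz') hw'
  · intro p hp
    refine ⟨fun l hl => ?_, fun h => ?_, fun h => ?_⟩
    · by_contra hne
      exact hl (by simpa using ⟨p.1, ⟨_, _, hp⟩, hne⟩)
    · by_contra hne
      exact (of_decide_eq_false h) ⟨p, hp, hne⟩
    · by_contra hne
      exact (of_decide_eq_false h) ⟨p, hp, hne⟩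

end Classification

/-! ### Counting -/

lemma card_finsets_of_card (m j : ℕ) :
    (∑ s : Finset (Fin m), if s.card = j then 1 else 0) = m.choose j := by
  rw [← Finset.card_filter, Finset.univ_filter_card_eq, Finset.card_powersetCard, Finset.card_univ,
    Fintype.card_fin]

/-- The number of choices of components of total dimension `2 * k`. -/
lemma card_choices (m k : ℕ) (hk : k ≤ 2 * m + 2) :
    ((Finset.univ.filter fun x : Finset (Fin m) × Bool × Bool =>
      4 * x.1.card + (if x.2.1 then 2 else 0) + (if x.2.2 then 2 else 0) = 2 * k).card : ℤ) =
        sigmaInt k (2 * m + 1) + sigmaInt ((k : ℤ) - 1) (2 * m + 1) := by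
  have hodd : ¬ Even (2 * (m : ℤ) + 1) := by simp
  have hhalf : ((2 * (m : ℤ) + 1) / 2).toNat = m := by omega
  rw [Finset.card_filter, Fintype.sum_prod_type]
  simp only [Fintype.sum_prod_type, Fintype.sum_bool, Finset.sum_add_distrib, if_true,
    Bool.false_eq_true, if_false, sigmaInt, hodd, and_false, hhalf]
  obtain ⟨t, rfl | rfl⟩ := Nat.even_or_odd' k
  · have e0 : ∀ c : ℕ, (4 * c + 0 + 0 = 2 * (2 * t)) ↔ c = t := fun c => by omega
    have e1 : ∀ c : ℕ, ¬ (4 * c + 2 + 0 = 2 * (2 * t)) := fun c => by omega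
    simp only [e0, e1, if_false, card_finsets_of_card, Finset.sum_const_zero]
    rcases t with _ | t
    · have e3 : ∀ c : ℕ, ¬ (4 * c + 2 + 2 = 2 * (2 * 0)) := fun c => by omega
      simp only [e3, if_false, Finset.sum_const_zero]
      rw [if_neg (by omega), if_pos (by omega)]
      simp
    · have e3 : ∀ c : ℕ, (4 * c + 2 + 2 = 2 * (2 * (t + 1))) ↔ c = t := fun c => by omega
      have h1 : (((2 * (t + 1) : ℕ) : ℤ) / 2).toNat = t + 1 := by omega
      have h2 : ((((2 * (t + 1) : ℕ) : ℤ) - 1) / 2).toNat = t := by omega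
      simp only [e3, card_finsets_of_card, h1, h2]
      rw [if_neg (c := _ ∨ 2 * (m : ℤ) + 1 < _ - 1) (by omega)]
      by_cases ht : t + 1 ≤ m
      · rw [if_neg (by omega)]
        push_cast
        ring
      · rw [if_pos (by omega), Nat.choose_eq_zero_of_lt (by omega : m < t + 1)]
        simp
  · have e0 : ∀ c : ℕ, ¬ (4 * c + 0 + 0 = 2 * (2 * t + 1)) := fun c => by omega
    have e1 : ∀ c : ℕ, (4 * c + 2 + 0 = 2 * (2 * t + 1)) ↔ c = t := fun c => by omega
    have e3 : ∀ c : ℕ, ¬ (4 * c + 2 + 2 = 2 * (2 * t + 1)) := fun c => by omega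
    have h1 : (((2 * t + 1 : ℕ) : ℤ) / 2).toNat = t := by omega
    have h2 : ((((2 * t + 1 : ℕ) : ℤ) - 1) / 2).toNat = t := by omega
    simp only [e0, e1, e3, if_false, card_finsets_of_card, Finset.sum_const_zero, h1, h2]
    rw [if_neg (by omega), if_neg (by omega)]
    push_cast
    ring

/-- For a generic pair of orthogonal complex structures on `ℍ^m × ℂ × ℂ` of type
`ℍ_{θ₁} ⊕ ⋯ ⊕ ℍ_{θ_m} ⊕ ℂ ⊕ ℂ̄`, the set of invariant `2k`-planes is finite of
cardinality `σ(k, 2m+1) + σ(k-1, 2m+1)`. -/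
theorem card_invariant_planes_plus_C_Cbar (m : ℕ) (θ : Fin m → ℝ)
    (hinj : Function.Injective θ) (hθ : ∀ l, θ l ∈ Set.Ioo (0 : ℝ) Real.pi)
    (k : ℕ) (hk : k ≤ 2 * m + 2) :
    (invariantPlanesCCbar m θ k).Finite ∧
      ((invariantPlanesCCbar m θ k).ncard : ℤ) =
        sigmaInt k (2 * m + 1) + sigmaInt ((k : ℤ) - 1) (2 * m + 1) := by
  classical
  have hset : invariantPlanesCCbar m θ k = ((Finset.univ.filter
      fun x : Finset (Fin m) × Bool × Bool =>
        4 * x.1.card + (if x.2.1 then 2 else 0) + (if x.2.2 then 2 else 0) = 2 * k).image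
          (componentSum m) : Finset _) := by
    ext P
    simp only [Finset.coe_image, Finset.coe_filter, Finset.mem_univ, true_and, Set.mem_image,
      Set.mem_ofPred_eq]
    constructor
    · intro hP
      obtain ⟨x, rfl⟩ := exists_componentSum_eq hinj hθ hP
      exact ⟨x, (finrank_componentSum m x).symm.trans hP.1, rfl⟩
    · rintro ⟨x, hx, rfl⟩
      exact componentSum_mem_invariantPlanes m θ k x hx
  rw [hset]
  refine ⟨Finset.finite_toSet _, ?_⟩
  rw [Set.ncard_coe_finset, Finset.card_image_of_injective _ (componentSum_injective m),
    card_choices m k hk]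
end

section
/- Let V be a 4-dimensional real inner product space and let J₀, J₁ be orthogonal complex structures on V. Then at least one of the following holds: (a) there exist a 2-dimensional subspace W of V invariant under both J₀ and J₁ and signs ε, ε′ ∈ {1,-1} such that J₁ = ε·J₀ on W and J₁ = ε′·J₀ on the orthogonal complement of W; or (b) there exist θ ∈ (0,π) and an ℝ-linear isometric isomorphism φ : V → ℍ with φ(J₀ x) = i·φ(x) and φ(J₁ x) = (cos θ · i + sin θ · k)·φ(x) for all x ∈ V. -/
/-!
The operator `S = J₀J₁ + J₁J₀` is symmetric, so it has a unit eigenvector `v`. With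
`c = ⟪J₀ v, J₁ v⟫`, its eigenvalue is `-2c`, and `|c| ≤ 1`.

If `c² = 1`, equality in Cauchy-Schwarz gives `J₁ v = c J₀ v`, so `W = span {v, J₀ v}` is invariant.
For a unit vector `u ∈ Wᗮ`, both `J₀ u` and `J₁ u` are orthogonal to the three vectors
`v, J₀ v, u`. As `dim V = 4` this forces `J₁ u = ± J₀ u`, and the sign is the same on all of
`Wᗮ = span {u, J₀ u}`.

If `c² < 1`, put `c = cos θ`, `s = sin θ > 0`, and `w = s⁻¹ (J₁ v - c J₀ v)`. The eigenvector equation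
makes `v, J₀ v, -J₀ w, w` an orthonormal basis on which `J₀` and `J₁` act as left multiplication by
`i` and `cos θ i + sin θ k` act on `1, i, j, k`.
-/

open scoped Quaternion

section Helpers

variable {V : Type*} [NormedAddCommGroup V] [InnerProductSpace ℝ V]

lemma inner_map_map_of_iso (J : V →ₗ[ℝ] V) (hiso : ∀ v, ‖J v‖ = ‖v‖) (x y : V) :
    inner ℝ (J x) (J y) = inner ℝ x y :=
  (⟨J, hiso⟩ : V →ₗᵢ[ℝ] V).inner_map_map x y

lemma apply_apply_of_sq (J : V →ₗ[ℝ] V) (hsq : J ∘ₗ J = -LinearMap.id) (x : V) :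
    J (J x) = -x := by
  simpa using LinearMap.congr_fun hsq x

/-- An orthogonal complex structure is skew-adjoint. -/
lemma inner_skew (J : V →ₗ[ℝ] V) (hiso : ∀ v, ‖J v‖ = ‖v‖) (hsq : J ∘ₗ J = -LinearMap.id)
    (x y : V) : inner ℝ (J x) y = -inner ℝ x (J y) := by
  rw [← inner_map_map_of_iso J hiso x (J y), apply_apply_of_sq J hsq, inner_neg_right, neg_neg]

lemma inner_self_map (J : V →ₗ[ℝ] V) (hiso : ∀ v, ‖J v‖ = ‖v‖) (hsq : J ∘ₗ J = -LinearMap.id)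
    (x : V) : inner ℝ x (J x) = 0 := by
  have h := inner_skew J hiso hsq x x
  rw [real_inner_comm] at h
  linarith

lemma exists_orthonormalBasis_four [FiniteDimensional ℝ V] (hV : Module.finrank ℝ V = 4)
    (a b c d : V) (haa : inner ℝ a a = 1) (hbb : inner ℝ b b = 1) (hcc : inner ℝ c c = 1)
    (hdd : inner ℝ d d = 1) (hab : inner ℝ a b = 0) (hac : inner ℝ a c = 0)
    (had : inner ℝ a d = 0) (hbc : inner ℝ b c = 0) (hbd : inner ℝ b d = 0)
    (hcd : inner ℝ c d = 0) :
    ∃ e : OrthonormalBasis (Fin 4) ℝ V, e 0 = a ∧ e 1 = b ∧ e 2 = c ∧ e 3 = d := by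
  have ho : Orthonormal ℝ ![a, b, c, d] := by
    rw [orthonormal_iff_ite]
    intro i j
    fin_cases i <;> fin_cases j <;>
      simp [haa, hbb, hcc, hdd, hab, hac, had, hbc, hbd, hcd,
        real_inner_comm a, real_inner_comm b, real_inner_comm c,
        -inner_self_eq_norm_sq_to_K]
  have hsp : ⊤ ≤ Submodule.span ℝ (Set.range ![a, b, c, d]) :=
    (ho.linearIndependent.span_eq_top_of_card_eq_finrank' (by simp [hV])).ge
  refine ⟨OrthonormalBasis.mk ho hsp, ?_, ?_, ?_, ?_⟩ <;> simp

/-- The symmetric operator `J₀J₁ + J₁J₀` has a unit eigenvector; pairing the eigenvector equation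
with `v` identifies the eigenvalue as `-2⟪J₀ v, J₁ v⟫`. -/
lemma exists_unit_eigenvector_s16 [FiniteDimensional ℝ V] (hV : Module.finrank ℝ V = 4)
    (J₀ J₁ : V →ₗ[ℝ] V)
    (h₀ : ∀ v, ‖J₀ v‖ = ‖v‖) (s₀ : J₀ ∘ₗ J₀ = -LinearMap.id)
    (h₁ : ∀ v, ‖J₁ v‖ = ‖v‖) (s₁ : J₁ ∘ₗ J₁ = -LinearMap.id) :
    ∃ v : V, inner ℝ v v = 1 ∧
      J₁ (J₀ v) = (-2 * inner ℝ (J₀ v) (J₁ v) : ℝ) • v - J₀ (J₁ v) := by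
  have hS : (J₀ ∘ₗ J₁ + J₁ ∘ₗ J₀).IsSymmetric := by
    intro x y
    simp only [LinearMap.add_apply, LinearMap.comp_apply, inner_add_left, inner_add_right,
      inner_skew J₀ h₀ s₀, inner_skew J₁ h₁ s₁]
    ring
  have he := hS.apply_eigenvectorBasis hV 0
  set v := hS.eigenvectorBasis hV 0 with hv
  set l : ℝ := hS.eigenvalues hV 0
  have hvv : inner ℝ v v = 1 := by
    rw [real_inner_self_eq_norm_sq, (hS.eigenvectorBasis hV).orthonormal.1 0]; norm_num
  simp only [LinearMap.add_apply, LinearMap.comp_apply, RCLike.ofReal_real_eq_id, id] at he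
  have hl : l = -2 * inner ℝ (J₀ v) (J₁ v) := by
    have h := congrArg (inner ℝ v) he
    rw [inner_add_right, inner_smul_right, hvv] at h
    have e₀ := inner_skew J₀ h₀ s₀ v (J₁ v)
    have e₁ := inner_skew J₁ h₁ s₁ v (J₀ v)
    rw [real_inner_comm] at e₁
    linarith
  refine ⟨v, hvv, ?_⟩
  rw [← hl, ← he]
  abel

/-- The case where `J₁ v = ± J₀ v` for some unit vector `v`. -/
lemma split_case [FiniteDimensional ℝ V] (hV : Module.finrank ℝ V = 4)
    (J₀ J₁ : V →ₗ[ℝ] V)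
    (h₀ : ∀ v, ‖J₀ v‖ = ‖v‖) (s₀ : J₀ ∘ₗ J₀ = -LinearMap.id)
    (h₁ : ∀ v, ‖J₁ v‖ = ‖v‖) (s₁ : J₁ ∘ₗ J₁ = -LinearMap.id)
    (v : V) (hvv : inner ℝ v v = 1) (c : ℝ) (hc : c = 1 ∨ c = -1) (hv : J₁ v = c • J₀ v) :
    ∃ W : Submodule ℝ V, Module.finrank ℝ W = 2 ∧
      (∀ v ∈ W, J₀ v ∈ W) ∧ (∀ v ∈ W, J₁ v ∈ W) ∧
      ∃ ε ε' : ℝ, (ε = 1 ∨ ε = -1) ∧ (ε' = 1 ∨ ε' = -1) ∧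
        (∀ v ∈ W, J₁ v = ε • J₀ v) ∧ (∀ v ∈ Wᗮ, J₁ v = ε' • J₀ v) := by
  have q₀ := apply_apply_of_sq J₀ s₀
  have q₁ := apply_apply_of_sq J₁ s₁
  have k₀ := inner_skew J₀ h₀ s₀
  have k₁ := inner_skew J₁ h₁ s₁
  have i₀ := inner_map_map_of_iso J₀ h₀
  have i₁ := inner_map_map_of_iso J₁ h₁
  -- If `J₁` is `ε J₀` at `x`, then it is so at `J₀ x`.
  have key : ∀ (ε : ℝ) (x : V), (ε = 1 ∨ ε = -1) → J₁ x = ε • J₀ x →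
      J₁ (J₀ x) = ε • J₀ (J₀ x) := by
    intro ε x hε hx
    have h := congrArg J₁ hx
    rw [q₁, map_smul] at h
    rw [q₀, h, smul_smul]
    rcases hε with rfl | rfl <;> norm_num
  have hbW : J₁ (J₀ v) = c • J₀ (J₀ v) := key c v hc hv
  set W : Submodule ℝ V := Submodule.span ℝ {v, J₀ v} with hW
  have hvW : v ∈ W := Submodule.subset_span (by simp)
  have hJW : J₀ v ∈ W := Submodule.subset_span (by simp)
  have hfin : Module.finrank ℝ W = 2 := by
    have ho : Orthonormal ℝ ![v, J₀ v] := by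
      rw [orthonormal_iff_ite]
      intro i j
      have h1 := inner_self_map J₀ h₀ s₀ v
      have h2 := h1
      rw [real_inner_comm] at h2
      have h3 := i₀ v v
      rw [hvv] at h3
      fin_cases i <;> fin_cases j <;>
        simp [hvv, h1, h2, h3, -inner_self_eq_norm_sq_to_K]
    have := finrank_span_eq_card ho.linearIndependent
    rw [Matrix.range_cons_cons_empty] at this
    simpa [hW] using this
  have hW₀ : ∀ x ∈ W, J₀ x ∈ W := by
    intro x hx
    obtain ⟨p, q, rfl⟩ := Submodule.mem_span_pair.1 hx
    rw [map_add, map_smul, map_smul, q₀]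
    exact W.add_mem (W.smul_mem _ hJW) (W.smul_mem _ (W.neg_mem hvW))
  have hW₁ : ∀ x ∈ W, J₁ x = c • J₀ x := by
    intro x hx
    obtain ⟨p, q, rfl⟩ := Submodule.mem_span_pair.1 hx
    simp only [map_add, map_smul, hv, hbW]
    module
  obtain ⟨u, huW, huu⟩ : ∃ u ∈ Wᗮ, inner ℝ u u = 1 := by
    have hne : Wᗮ ≠ ⊥ := by
      intro h
      have := W.finrank_add_finrank_orthogonal
      rw [h, finrank_bot, hfin, hV] at this
      omega
    obtain ⟨y, hy, hy0⟩ := Submodule.exists_mem_ne_zero_of_ne_bot hne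
    refine ⟨‖y‖⁻¹ • y, Wᗮ.smul_mem _ hy, ?_⟩
    rw [real_inner_self_eq_norm_sq, norm_smul, norm_inv, norm_norm,
      inv_mul_cancel₀ (norm_ne_zero_iff.2 hy0), one_pow]
  have hp : ∀ x ∈ Wᗮ, inner ℝ v x = 0 ∧ inner ℝ (J₀ v) x = 0 := fun x hx =>
    ⟨Submodule.inner_right_of_mem_orthogonal hvW hx,
      Submodule.inner_right_of_mem_orthogonal hJW hx⟩
  obtain ⟨hu1, hu2⟩ := hp u huW
  obtain ⟨e, e0, e1, e2, e3⟩ := exists_orthonormalBasis_four hV v (J₀ v) u (J₀ u)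
    hvv (by rw [i₀, hvv]) huu (by rw [i₀, huu]) (inner_self_map J₀ h₀ s₀ v) hu1
    (by have := k₀ v u; linarith) hu2 (by rw [i₀, hu1]) (inner_self_map J₀ h₀ s₀ u)
  have hrep : ∀ x, inner ℝ v x = 0 → inner ℝ (J₀ v) x = 0 →
      x = inner ℝ u x • u + inner ℝ (J₀ u) x • J₀ u := by
    intro x hx1 hx2
    have := e.sum_repr' x
    rw [Fin.sum_univ_four, e0, e1, e2, e3, hx1, hx2] at this
    simpa using this.symm
  set ε' : ℝ := inner ℝ (J₀ u) (J₁ u) with hε'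
  have hu : J₁ u = ε' • J₀ u := by
    have h := hrep (J₁ u)
      (by
        have := k₁ v u
        rw [hv, inner_smul_left, hu2] at this
        simp at this; exact this)
      (by
        have := k₁ (J₀ v) u
        rw [hbW, q₀, inner_smul_left, inner_neg_left, hu1] at this
        simp at this; exact this)
    rw [inner_self_map J₁ h₁ s₁ u] at h
    simpa using h
  have hε : ε' = 1 ∨ ε' = -1 := by
    have h := i₁ u u
    rw [hu, inner_smul_left, inner_smul_right, i₀, huu] at h
    simp at h
    exact mul_self_eq_one_iff.1 h
  refine ⟨W, hfin, hW₀, fun x hx => ?_, c, ε', hc, hε, hW₁, fun x hx => ?_⟩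
  · rw [hW₁ x hx]
    exact W.smul_mem _ (hW₀ x hx)
  · obtain ⟨hx1, hx2⟩ := hp x hx
    rw [hrep x hx1 hx2]
    simp only [map_add, map_smul, hu, key ε' u hε hu]
    module

/-- The case of an eigenvector `v` of `J₀J₁ + J₁J₀` with `J₀ v` and `J₁ v` independent. -/
lemma quaternionic_case [FiniteDimensional ℝ V] (hV : Module.finrank ℝ V = 4)
    (J₀ J₁ : V →ₗ[ℝ] V)
    (h₀ : ∀ v, ‖J₀ v‖ = ‖v‖) (s₀ : J₀ ∘ₗ J₀ = -LinearMap.id)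
    (h₁ : ∀ v, ‖J₁ v‖ = ‖v‖) (s₁ : J₁ ∘ₗ J₁ = -LinearMap.id)
    (v : V) (hvv : inner ℝ v v = 1) (c s : ℝ) (hs : s ≠ 0) (hcs : s ^ 2 + c ^ 2 = 1)
    (hc : inner ℝ (J₀ v) (J₁ v) = c) (hv : J₁ (J₀ v) = (-2 * c) • v - J₀ (J₁ v)) :
    ∃ φ : V ≃ₗᵢ[ℝ] ℍ[ℝ],
      (∀ x, φ (J₀ x) = qI * φ x) ∧ (∀ x, φ (J₁ x) = (c • qI + s • qK) * φ x) := by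
  have q₀ := apply_apply_of_sq J₀ s₀
  have q₁ := apply_apply_of_sq J₁ s₁
  have k₀ := inner_skew J₀ h₀ s₀
  have k₁ := inner_skew J₁ h₁ s₁
  have i₀ := inner_map_map_of_iso J₀ h₀
  have i₁ := inner_map_map_of_iso J₁ h₁
  obtain ⟨w, hw⟩ : ∃ w, J₁ v = c • J₀ v + s • w :=
    ⟨s⁻¹ • (J₁ v - c • J₀ v), by rw [smul_smul, mul_inv_cancel₀ hs]; module⟩
  have hvb : inner ℝ v (J₀ v) = 0 := inner_self_map J₀ h₀ s₀ v
  have hbb : inner ℝ (J₀ v) (J₀ v) = 1 := by rw [i₀, hvv]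
  have hvw : inner ℝ v w = 0 := by
    have h := inner_self_map J₁ h₁ s₁ v
    rw [hw, inner_add_right, inner_smul_right, inner_smul_right, hvb] at h
    simpa [hs] using h
  have hbw : inner ℝ (J₀ v) w = 0 := by
    have h := hc
    rw [hw, inner_add_right, inner_smul_right, inner_smul_right, hbb] at h
    simpa [hs] using h
  have hww : inner ℝ w w = 1 := by
    have h := i₁ v v
    have hwb := hbw
    rw [real_inner_comm] at hwb
    simp only [hw, inner_add_left, inner_add_right, real_inner_smul_left, real_inner_smul_right,
      hbb, hbw, hwb, hvv] at h
    have : s ^ 2 * (inner ℝ w w - 1) = 0 := by linear_combination h - hcs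
    have := (mul_eq_zero.1 this).resolve_left (pow_ne_zero 2 hs)
    linarith
  -- The matrix of `J₁` in the basis `v, J₀ v, w, J₀ w`.
  have hb : J₁ (J₀ v) = -(c • v) - s • J₀ w := by
    rw [hv, hw, map_add, map_smul, map_smul, q₀]
    module
  have hJw : J₁ w = -(s • v) + c • J₀ w := by
    have h := congrArg J₁ hw
    rw [q₁, map_add, map_smul, map_smul, hb] at h
    have h' : s • J₁ w = -v - c • (-(c • v) - s • J₀ w) := by rw [h]; module
    refine smul_right_injective V hs (?_ : s • J₁ w = s • _)
    rw [h']
    match_scalars <;> first | ring1 | linear_combination hcs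
  have hJd : J₁ (J₀ w) = s • J₀ v - c • w := by
    have h := congrArg J₁ hb
    rw [q₁, map_sub, map_neg, map_smul, map_smul, hw] at h
    have h' : s • J₁ (J₀ w) = J₀ v - c • (c • J₀ v + s • w) := by
      rw [eq_sub_iff_add_eq, ← neg_inj, neg_add, ← sub_eq_neg_add, h]
    refine smul_right_injective V hs (?_ : s • J₁ (J₀ w) = s • _)
    rw [h']
    match_scalars <;> first | ring1 | linear_combination hcs | linear_combination -hcs
  obtain ⟨e, e0, e1, e2, e3⟩ := exists_orthonormalBasis_four hV v (J₀ v) (-J₀ w) w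
    hvv hbb (by rw [inner_neg_left, inner_neg_right, i₀, hww, neg_neg]) hww hvb
    (by have := k₀ v w; rw [inner_neg_right]; linarith) hvw
    (by rw [inner_neg_right, i₀, hvw, neg_zero]) hbw
    (by rw [inner_neg_left, real_inner_comm, inner_self_map J₀ h₀ s₀, neg_zero])
  obtain ⟨φ, fre, fi, fj, fk⟩ : ∃ φ : V ≃ₗᵢ[ℝ] ℍ[ℝ], (∀ x, (φ x).re = inner ℝ v x) ∧
      (∀ x, (φ x).imI = inner ℝ (J₀ v) x) ∧ (∀ x, (φ x).imJ = -inner ℝ (J₀ w) x) ∧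
      (∀ x, (φ x).imK = inner ℝ w x) := by
    refine ⟨e.repr.trans Quaternion.linearIsometryEquivTuple.symm, ?_, ?_, ?_, ?_⟩ <;>
      intro x <;> simp [OrthonormalBasis.repr_apply_apply, e0, e1, e2, e3]
  have I0 : qI.re = 0 := rfl
  have I1 : qI.imI = 1 := rfl
  have I2 : qI.imJ = 0 := rfl
  have I3 : qI.imK = 0 := rfl
  have K0 : qK.re = 0 := rfl
  have K1 : qK.imI = 0 := rfl
  have K2 : qK.imJ = 0 := rfl
  have K3 : qK.imK = 1 := rfl
  -- Coordinates of `J x` are read off by moving the skew map `J` onto the basis vectors.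
  refine ⟨φ, fun x => ?_, fun x => ?_⟩
  · have a0 := k₀ v x
    have a1 := k₀ (J₀ v) x
    have a2 := k₀ (J₀ w) x
    have a3 := k₀ w x
    simp only [q₀, inner_neg_left] at a1 a2
    ext <;> simp [fre, fi, fj, fk, I0, I1, I2, I3] <;> linarith
  · have a0 := k₁ v x
    have a1 := k₁ (J₀ v) x
    have a2 := k₁ (J₀ w) x
    have a3 := k₁ w x
    simp only [hw, hb, hJw, hJd, inner_add_left, inner_sub_left, inner_neg_left,
      real_inner_smul_left] at a0 a1 a2 a3
    ext <;> simp [fre, fi, fj, fk, I0, I1, I2, I3, K0, K1, K2, K3] <;> linarith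

end Helpers

/-- Classification of pairs of orthogonal complex structures on a `4`-dimensional real
inner product space: either there is an invariant `2`-plane `W` with `J₁ = ±J₀` on `W`
and on `Wᗮ`, or the pair is isometrically isomorphic to `(ℍ, i, cos θ · i + sin θ · k)`
for some `θ ∈ (0,π)`. -/
theorem classification_dim_four
    (V : Type*) [NormedAddCommGroup V] [InnerProductSpace ℝ V] [FiniteDimensional ℝ V]
    (hV : Module.finrank ℝ V = 4)
    (J₀ J₁ : V →ₗ[ℝ] V)
    (hJ₀iso : ∀ v, ‖J₀ v‖ = ‖v‖) (hJ₀sq : J₀ ∘ₗ J₀ = -LinearMap.id)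
    (hJ₁iso : ∀ v, ‖J₁ v‖ = ‖v‖) (hJ₁sq : J₁ ∘ₗ J₁ = -LinearMap.id) :
    (∃ W : Submodule ℝ V, Module.finrank ℝ W = 2 ∧
      (∀ v ∈ W, J₀ v ∈ W) ∧ (∀ v ∈ W, J₁ v ∈ W) ∧
      ∃ ε ε' : ℝ, (ε = 1 ∨ ε = -1) ∧ (ε' = 1 ∨ ε' = -1) ∧
        (∀ v ∈ W, J₁ v = ε • J₀ v) ∧ (∀ v ∈ Wᗮ, J₁ v = ε' • J₀ v)) ∨
    (∃ θ ∈ Set.Ioo (0 : ℝ) Real.pi, ∃ φ : V ≃ₗᵢ[ℝ] ℍ[ℝ],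
      (∀ x, φ (J₀ x) = qI * φ x) ∧
      (∀ x, φ (J₁ x) = (Real.cos θ • qI + Real.sin θ • qK) * φ x)) := by
  obtain ⟨v, hvv, hv⟩ := exists_unit_eigenvector_s16 hV J₀ J₁ hJ₀iso hJ₀sq hJ₁iso hJ₁sq
  set c : ℝ := inner ℝ (J₀ v) (J₁ v) with hc
  have n0 : inner ℝ (J₀ v) (J₀ v) = 1 := by rw [inner_map_map_of_iso J₀ hJ₀iso, hvv]
  have n1 : inner ℝ (J₁ v) (J₁ v) = 1 := by rw [inner_map_map_of_iso J₁ hJ₁iso, hvv]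
  have hd : inner ℝ (J₁ v - c • J₀ v) (J₁ v - c • J₀ v) = 1 - c ^ 2 := by
    simp only [inner_sub_left, inner_sub_right, real_inner_smul_left, real_inner_smul_right,
      n0, n1, real_inner_comm (J₀ v) (J₁ v), ← hc]
    ring
  have hle : c ^ 2 ≤ 1 := by
    have := real_inner_self_nonneg (x := J₁ v - c • J₀ v)
    linarith
  rcases hle.eq_or_lt with h1 | h1
  · left
    rw [h1, sub_self, inner_self_eq_zero, sub_eq_zero] at hd
    exact split_case hV J₀ J₁ hJ₀iso hJ₀sq hJ₁iso hJ₁sq v hvv c (by simpa using h1) hd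
  · right
    obtain ⟨hl, hr⟩ := abs_lt.1 ((sq_lt_one_iff_abs_lt_one c).1 h1)
    have hcos : Real.cos (Real.arccos c) = c := Real.cos_arccos hl.le hr.le
    have hθ : Real.arccos c ∈ Set.Ioo (0 : ℝ) Real.pi :=
      ⟨Real.arccos_pos.2 hr, (Real.arccos_le_pi c).lt_of_ne fun h => by
        rw [h, Real.cos_pi] at hcos; linarith⟩
    refine ⟨Real.arccos c, hθ, ?_⟩
    refine quaternionic_case hV J₀ J₁ hJ₀iso hJ₀sq hJ₁iso hJ₁sq v hvv _ _
      (Real.sin_pos_of_mem_Ioo hθ).ne' (Real.sin_sq_add_cos_sq _) ?_ ?_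
    · rw [hcos]
    · rw [hcos, hv]
end
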